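/- arXiv:0908.1263 — 2 statements merged into one kernel-verified Lean document; each statement's English description precedes it below -/
import Mathlib

section
/- Let {Ω_i} be a countable partition of ℝⁿ into bounded convex measurable sets with diameters at most D, and let f ∈ W^{1,1}(ℝⁿ). If πf denotes the function equal on each Ω_i to the mean of f over Ω_i, then ‖f − πf‖₁ ≤ (π/2) · D · ‖∇f‖₁. -/
open Filter Topology MeasureTheory

open scoped ENNReal Pointwise ProbabilityTheory ContDiff Convolution

/-!
By the Prékopa–Leindler inequality, the normalized restriction `ν` of Haar measure to a convex cell
`Ω` is log-concave. For `u` of class `C¹` and `d = diam Ω`, a point `x` of `{s < u} ∩ Ω`, moved a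
fraction `t` of the way towards any point of `Ω`, lands in the superlevel set of
`w = u + t d (‖∇u‖ + η)`, provided `t` is small; hence `ν {s < u} ^ (1 - t) ≤ ν {s < w}`.
Comparing the terms of first order in `t` and integrating over `s` gives
`∫ -p log p ds ≤ d ∫ ‖∇u‖ dν` with `p s = ν {s < u}`. The same bound for `-u` controls
`∫ binEntropy (p s) ds` by `2 d ∫ ‖∇u‖ dν`. As `p (1 - p) ≤ 3 / 8 * binEntropy p` and
`∫∫ |u x - u y| dν dν = 2 ∫ p (1 - p) ds`, the `L¹` Poincaré inequality follows on each cell with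
constant `3 / 2 < π / 2`. Mollification extends it to weakly differentiable functions.
-/

/-! ### The Prékopa–Leindler inequality -/

theorem volume_add_volume_le_of_isCompact {K L : Set ℝ} (hK : IsCompact K) (hL : IsCompact L)
    (hK₀ : K.Nonempty) (hL₀ : L.Nonempty) : volume K + volume L ≤ volume (K + L) := by
  obtain ⟨k, hk, hk_max⟩ := hK.exists_isGreatest hK₀
  obtain ⟨l, hl, hl_min⟩ := hL.exists_isLeast hL₀
  -- The translates `l +ᵥ K` and `k +ᵥ L` of `K` and `L` lie in `K + L` and meet only at `k + l`.
  have hdisj : AEDisjoint volume (l +ᵥ K) (k +ᵥ L) := by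
    refine measure_mono_null (t := {k + l}) ?_ (measure_singleton _)
    rintro _ ⟨⟨x, hx, rfl⟩, ⟨y, hy, hxy⟩⟩
    simp only [vadd_eq_add, Set.mem_singleton_iff] at hxy ⊢
    linarith [hk_max hx, hl_min hy]
  calc volume K + volume L = volume (l +ᵥ K) + volume (k +ᵥ L) := by simp only [measure_vadd]
    _ = volume ((l +ᵥ K) ∪ (k +ᵥ L)) :=
        (measure_union₀ (hL.vadd k).measurableSet.nullMeasurableSet hdisj).symm
    _ ≤ volume (K + L) := by
        refine measure_mono (Set.union_subset ?_ (Set.vadd_set_subset_add hk))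
        rw [add_comm K L]
        exact Set.vadd_set_subset_add hl

theorem volume_add_volume_le {A B : Set ℝ} (hA : MeasurableSet A) (hB : MeasurableSet B)
    (hA₀ : A.Nonempty) (hB₀ : B.Nonempty) : volume A + volume B ≤ volume (A + B) := by
  obtain ⟨a, ha⟩ := hA₀
  obtain ⟨b, hb⟩ := hB₀
  rw [hA.measure_eq_iSup_isCompact, hB.measure_eq_iSup_isCompact]
  simp only [iSup_and']
  refine ENNReal.biSup_add_biSup_le' (p := fun K => K ⊆ A ∧ IsCompact K)
    (q := fun L => L ⊆ B ∧ IsCompact L) ⟨∅, Set.empty_subset A, isCompact_empty⟩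
    ⟨∅, Set.empty_subset B, isCompact_empty⟩ ?_
  rintro K ⟨hKA, hK⟩ L ⟨hLB, hL⟩
  calc volume K + volume L ≤ volume (insert a K) + volume (insert b L) := by
        gcongr <;> exact Set.subset_insert _ _
    _ ≤ volume (insert a K + insert b L) :=
        volume_add_volume_le_of_isCompact (hK.insert a) (hL.insert b) (by simp) (by simp)
    _ ≤ volume (A + B) := by
        gcongr
        exacts [Set.insert_subset ha hKA, Set.insert_subset hb hLB]

theorem ofReal_mul_volume_add_le {t : ℝ} (ht₀ : 0 ≤ t) (ht₁ : t ≤ 1) {A B : Set ℝ}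
    (hA : MeasurableSet A) (hB : MeasurableSet B) (hA₀ : A.Nonempty) (hB₀ : B.Nonempty) :
    ENNReal.ofReal (1 - t) * volume A + ENNReal.ofReal t * volume B ≤
      volume ((1 - t) • A + t • B) := by
  simpa [Measure.addHaar_smul, abs_of_nonneg ht₀, abs_of_nonneg (sub_nonneg.2 ht₁)] using
    volume_add_volume_le (hA.const_smul₀ (1 - t)) (hB.const_smul₀ t) hA₀.smul_set hB₀.smul_set

theorem rpow_mul_rpow_le_ofReal_mul_add {t : ℝ} (ht₀ : 0 < t) (ht₁ : t < 1) (a b : ℝ≥0∞) :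
    a ^ (1 - t) * b ^ t ≤ ENNReal.ofReal (1 - t) * a + ENNReal.ofReal t * b := by
  have ht' : 0 < 1 - t := sub_pos.2 ht₁
  rcases eq_or_ne a ⊤ with rfl | ha
  · rw [ENNReal.mul_top (by simpa using ht₁), top_add]
    exact le_top
  rcases eq_or_ne b ⊤ with rfl | hb
  · rw [ENNReal.mul_top (by simpa using ht₀), add_top]
    exact le_top
  lift a to NNReal using ha
  lift b to NNReal using hb
  rw [← ENNReal.coe_rpow_of_nonneg _ ht'.le, ← ENNReal.coe_rpow_of_nonneg _ ht₀.le,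
    ENNReal.ofReal_eq_coe_nnreal ht'.le, ENNReal.ofReal_eq_coe_nnreal ht₀.le]
  exact_mod_cast NNReal.geom_mean_le_arith_mean2_weighted ⟨1 - t, ht'.le⟩ ⟨t, ht₀.le⟩ a b
    (Subtype.ext (sub_add_cancel 1 t))

theorem volume_setOf_ofReal_lt (c : ℝ≥0∞) :
    volume {s : ℝ | 0 < s ∧ ENNReal.ofReal s < c} = c := by
  induction c with
  | top => simpa [Set.Ioi] using Real.volume_Ioi (a := 0)
  | coe c =>
    have : {s : ℝ | 0 < s ∧ ENNReal.ofReal s < c} = Set.Ioo 0 (c : ℝ) :=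
      Set.ext fun s => and_congr_right fun hs => by
        rw [ENNReal.ofReal_lt_coe_iff hs.le]
    simp [this]

theorem lintegral_eq_lintegral_measure_ofReal_lt {X : Type*} [MeasurableSpace X] (μ : Measure X)
    [SFinite μ] {f : X → ℝ≥0∞} (hf : Measurable f) :
    ∫⁻ x, f x ∂μ = ∫⁻ s in Set.Ioi (0 : ℝ), μ {x | ENNReal.ofReal s < f x} := by
  have hU : MeasurableSet {p : X × ℝ | 0 < p.2 ∧ ENNReal.ofReal p.2 < f p.1} :=
    (measurableSet_lt measurable_const measurable_snd).inter
      (measurableSet_lt (ENNReal.measurable_ofReal.comp measurable_snd) (hf.comp measurable_fst))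
  calc ∫⁻ x, f x ∂μ
      = (μ.prod volume) {p : X × ℝ | 0 < p.2 ∧ ENNReal.ofReal p.2 < f p.1} := by
        rw [Measure.prod_apply hU]
        exact lintegral_congr fun x => (volume_setOf_ofReal_lt (f x)).symm
    _ = ∫⁻ s in Set.Ioi (0 : ℝ), μ {x | ENNReal.ofReal s < f x} := by
        rw [Measure.prod_apply_symm hU, ← lintegral_indicator measurableSet_Ioi]
        refine lintegral_congr fun s => ?_
        by_cases hs : 0 < s <;> simp [hs]

theorem measurable_measure_ofReal_lt {X : Type*} [MeasurableSpace X] (μ : Measure X)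
    (f : X → ℝ≥0∞) : Measurable fun s : ℝ => μ {x | ENNReal.ofReal s < f x} :=
  Antitone.measurable fun _ _ h =>
    measure_mono fun _ hx => (ENNReal.ofReal_le_ofReal h).trans_lt hx

theorem prekopaLeindler_real_of_iSup_eq_one {t : ℝ} (ht₀ : 0 < t) (ht₁ : t < 1)
    {f g h : ℝ → ℝ≥0∞} (hf : Measurable f) (hg : Measurable g) (hh : Measurable h)
    (hf_sup : ⨆ x, f x = 1) (hg_sup : ⨆ x, g x = 1)
    (hfgh : ∀ x y, f x ^ (1 - t) * g y ^ t ≤ h ((1 - t) • x + t • y)) :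
    (∫⁻ x, f x) ^ (1 - t) * (∫⁻ x, g x) ^ t ≤ ∫⁻ x, h x := by
  have ht' : 0 < 1 - t := sub_pos.2 ht₁
  have hlevel (s : ℝ) : ENNReal.ofReal (1 - t) * volume {x | ENNReal.ofReal s < f x} +
      ENNReal.ofReal t * volume {x | ENNReal.ofReal s < g x} ≤
        volume {x | ENNReal.ofReal s < h x} := by
    rcases lt_or_ge (ENNReal.ofReal s) 1 with hs₁ | hs₁
    swap
    · simp [((hf_sup ▸ le_iSup f _).trans hs₁).not_gt, ((hg_sup ▸ le_iSup g _).trans hs₁).not_gt]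
    refine (ofReal_mul_volume_add_le ht₀.le ht₁.le (measurableSet_lt measurable_const hf)
      (measurableSet_lt measurable_const hg) (lt_iSup_iff.1 (hs₁.trans_eq hf_sup.symm))
      (lt_iSup_iff.1 (hs₁.trans_eq hg_sup.symm))).trans (measure_mono ?_)
    rintro _ ⟨_, ⟨x, hx, rfl⟩, _, ⟨y, hy, rfl⟩, rfl⟩
    calc ENNReal.ofReal s = ENNReal.ofReal s ^ (1 - t) * ENNReal.ofReal s ^ t := by
          rw [← ENNReal.rpow_add_of_nonneg _ _ ht'.le ht₀.le, sub_add_cancel, ENNReal.rpow_one]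
      _ < f x ^ (1 - t) * g y ^ t :=
          ENNReal.mul_lt_mul (ENNReal.rpow_lt_rpow hx ht') (ENNReal.rpow_lt_rpow hy ht₀)
      _ ≤ h ((1 - t) • x + t • y) := hfgh x y
  calc (∫⁻ x, f x) ^ (1 - t) * (∫⁻ x, g x) ^ t
      ≤ ENNReal.ofReal (1 - t) * (∫⁻ x, f x) + ENNReal.ofReal t * ∫⁻ x, g x :=
        rpow_mul_rpow_le_ofReal_mul_add ht₀ ht₁ _ _
    _ = ∫⁻ s in Set.Ioi (0 : ℝ), (ENNReal.ofReal (1 - t) * volume {x | ENNReal.ofReal s < f x} +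
          ENNReal.ofReal t * volume {x | ENNReal.ofReal s < g x}) := by
        rw [lintegral_add_left ((measurable_measure_ofReal_lt _ f).const_mul _),
          lintegral_const_mul _ (measurable_measure_ofReal_lt _ f),
          lintegral_const_mul _ (measurable_measure_ofReal_lt _ g),
          ← lintegral_eq_lintegral_measure_ofReal_lt _ hf,
          ← lintegral_eq_lintegral_measure_ofReal_lt _ hg]
    _ ≤ ∫⁻ s in Set.Ioi (0 : ℝ), volume {x | ENNReal.ofReal s < h x} :=
        lintegral_mono hlevel
    _ = ∫⁻ x, h x := (lintegral_eq_lintegral_measure_ofReal_lt _ hh).symm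

theorem prekopaLeindler_real_of_iSup_ne_top {t : ℝ} (ht₀ : 0 < t) (ht₁ : t < 1)
    {f g h : ℝ → ℝ≥0∞} (hf : Measurable f) (hg : Measurable g) (hh : Measurable h)
    (hf_sup : ⨆ x, f x ≠ ⊤) (hg_sup : ⨆ x, g x ≠ ⊤)
    (hfgh : ∀ x y, f x ^ (1 - t) * g y ^ t ≤ h ((1 - t) • x + t • y)) :
    (∫⁻ x, f x) ^ (1 - t) * (∫⁻ x, g x) ^ t ≤ ∫⁻ x, h x := by
  have ht' : 0 < 1 - t := sub_pos.2 ht₁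
  set a := ⨆ x, f x with ha
  set b := ⨆ x, g x with hb
  rcases eq_or_ne a 0 with ha₀ | ha₀
  · have : ∀ x, f x = 0 := by simpa [ha] using ha₀
    simp [this, ht']
  rcases eq_or_ne b 0 with hb₀ | hb₀
  · have : ∀ x, g x = 0 := by simpa [hb] using hb₀
    simp [this, ht₀]
  set c := a ^ (1 - t) * b ^ t with hc
  have hc₀ : c ≠ 0 := mul_ne_zero (by simp [ha₀, hf_sup]) (by simp [hb₀, hg_sup])
  have hc_top : c ≠ ⊤ := ENNReal.mul_ne_top (ENNReal.rpow_ne_top_of_nonneg ht'.le hf_sup)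
    (ENNReal.rpow_ne_top_of_nonneg ht₀.le hg_sup)
  have hscale (u v : ℝ≥0∞) :
      (a⁻¹ * u) ^ (1 - t) * (b⁻¹ * v) ^ t = c⁻¹ * (u ^ (1 - t) * v ^ t) := by
    rw [ENNReal.mul_rpow_of_nonneg _ _ ht'.le, ENNReal.mul_rpow_of_nonneg _ _ ht₀.le, hc,
      ENNReal.mul_inv (by simp [ha₀, hf_sup]) (by simp [ha₀, hf_sup]), ENNReal.inv_rpow,
      ENNReal.inv_rpow]
    ring
  have hnormalized := prekopaLeindler_real_of_iSup_eq_one ht₀ ht₁ (hf.const_mul a⁻¹)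
    (hg.const_mul b⁻¹) (hh.const_mul c⁻¹)
    (by rw [← ENNReal.mul_iSup]; exact ENNReal.inv_mul_cancel ha₀ hf_sup)
    (by rw [← ENNReal.mul_iSup]; exact ENNReal.inv_mul_cancel hb₀ hg_sup)
    (fun x y => by rw [hscale]; gcongr; exact hfgh x y)
  rw [lintegral_const_mul _ hf, lintegral_const_mul _ hg, lintegral_const_mul _ hh, hscale]
    at hnormalized
  exact (ENNReal.mul_le_mul_iff_right (by simpa using hc_top) (by simpa using hc₀)).1 hnormalized

theorem lintegral_eq_iSup_lintegral_min {X : Type*} [MeasurableSpace X] (μ : Measure X)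
    {f : X → ℝ≥0∞} (hf : Measurable f) :
    ∫⁻ x, f x ∂μ = ⨆ N : ℕ, ∫⁻ x, min (f x) N ∂μ := by
  rw [← lintegral_iSup (f := fun (N : ℕ) x => min (f x) N) (fun N => by fun_prop)
    (fun N M hNM x => min_le_min_left _ (by exact_mod_cast hNM))]
  refine lintegral_congr fun x => ?_
  rw [← inf_iSup_eq, ENNReal.iSup_natCast, inf_top_eq]

section LogConcave

variable {E F : Type*} [AddCommGroup E] [Module ℝ E] [MeasurableSpace E]
  [AddCommGroup F] [Module ℝ F] [MeasurableSpace F] {μ : Measure E} {ν : Measure F}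

/-- Log-concavity of a measure, i.e. `μ A ^ (1 - t) * μ B ^ t ≤ μ ((1 - t) • A + t • B)`, in its
functional form (the conclusion of the Prékopa–Leindler inequality): unlike the inequality for sets,
this form passes to products by Tonelli's theorem alone. -/
def IsLogConcave (μ : Measure E) : Prop :=
  ∀ ⦃t : ℝ⦄, 0 < t → t < 1 → ∀ ⦃f g h : E → ℝ≥0∞⦄, Measurable f → Measurable g → Measurable h →
    (∀ x y, f x ^ (1 - t) * g y ^ t ≤ h ((1 - t) • x + t • y)) →
    (∫⁻ x, f x ∂μ) ^ (1 - t) * (∫⁻ x, g x ∂μ) ^ t ≤ ∫⁻ x, h x ∂μ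

theorem isLogConcave_volume_real : IsLogConcave (volume : Measure ℝ) := by
  intro t ht₀ ht₁ f g h hf hg hh hfgh
  have ht' : 0 < 1 - t := sub_pos.2 ht₁
  have rpow_iSup {p : ℝ} (hp : 0 < p) (u : ℕ → ℝ≥0∞) : (⨆ N, u N) ^ p = ⨆ N, u N ^ p :=
    (ENNReal.orderIsoRpow p hp).map_iSup u
  rw [lintegral_eq_iSup_lintegral_min _ hf, lintegral_eq_iSup_lintegral_min _ hg, rpow_iSup ht',
    rpow_iSup ht₀, ENNReal.iSup_mul]
  refine iSup_le fun N => ?_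
  rw [ENNReal.mul_iSup]
  refine iSup_le fun M => ?_
  refine prekopaLeindler_real_of_iSup_ne_top ht₀ ht₁ (by fun_prop) (by fun_prop) hh
    (ne_top_of_le_ne_top (ENNReal.natCast_ne_top N) (iSup_le fun x => min_le_right _ _))
    (ne_top_of_le_ne_top (ENNReal.natCast_ne_top M) (iSup_le fun x => min_le_right _ _))
    fun x y => le_trans ?_ (hfgh x y)
  gcongr <;> exact min_le_left _ _

namespace IsLogConcave

theorem measure_rpow_mul_le (hμ : IsLogConcave μ) {t : ℝ} (ht₀ : 0 < t) (ht₁ : t < 1)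
    {A B Z : Set E} (hA : MeasurableSet A) (hB : MeasurableSet B) (hZ : MeasurableSet Z)
    (hABZ : ∀ x ∈ A, ∀ y ∈ B, (1 - t) • x + t • y ∈ Z) :
    μ A ^ (1 - t) * μ B ^ t ≤ μ Z := by
  rw [← lintegral_indicator_one hA, ← lintegral_indicator_one hB, ← lintegral_indicator_one hZ]
  refine hμ ht₀ ht₁ (measurable_one.indicator hA) (measurable_one.indicator hB)
    (measurable_one.indicator hZ) fun x y => ?_
  by_cases hx : x ∈ A
  · by_cases hy : y ∈ B
    · simp [hx, hy, hABZ x hx y hy]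
    · simp [hy, ht₀]
  · simp [hx, ht₁]

theorem restrict (hμ : IsLogConcave μ) {s : Set E} (hs : Convex ℝ s) (hs_meas : MeasurableSet s) :
    IsLogConcave (μ.restrict s) := by
  intro t ht₀ ht₁ f g h hf hg hh hfgh
  simp only [← lintegral_indicator hs_meas]
  refine hμ ht₀ ht₁ (hf.indicator hs_meas) (hg.indicator hs_meas) (hh.indicator hs_meas)
    fun x y => ?_
  by_cases hx : x ∈ s
  · by_cases hy : y ∈ s
    · have hxy := hs hx hy (sub_nonneg.2 ht₁.le) ht₀.le (sub_add_cancel 1 t)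
      simpa only [Set.indicator_of_mem, hx, hy, hxy] using hfgh x y
    · simp [hy, ht₀]
  · simp [hx, ht₁]

theorem smul (hμ : IsLogConcave μ) (c : ℝ≥0∞) : IsLogConcave (c • μ) := by
  intro t ht₀ ht₁ f g h hf hg hh hfgh
  simp only [lintegral_smul_measure, smul_eq_mul]
  calc (c * ∫⁻ x, f x ∂μ) ^ (1 - t) * (c * ∫⁻ x, g x ∂μ) ^ t
      = (c ^ (1 - t) * c ^ t) * ((∫⁻ x, f x ∂μ) ^ (1 - t) * (∫⁻ x, g x ∂μ) ^ t) := by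
        rw [ENNReal.mul_rpow_of_nonneg _ _ (sub_nonneg.2 ht₁.le),
          ENNReal.mul_rpow_of_nonneg _ _ ht₀.le]
        ring
    _ = c * ((∫⁻ x, f x ∂μ) ^ (1 - t) * (∫⁻ x, g x ∂μ) ^ t) := by
        rw [← ENNReal.rpow_add_of_nonneg _ _ (sub_nonneg.2 ht₁.le) ht₀.le, sub_add_cancel,
          ENNReal.rpow_one]
    _ ≤ c * ∫⁻ x, h x ∂μ := by gcongr; exact hμ ht₀ ht₁ hf hg hh hfgh

theorem map (hμ : IsLogConcave μ) {L : E →ₗ[ℝ] F} (hL : Measurable L) :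
    IsLogConcave (μ.map L) := by
  intro t ht₀ ht₁ f g h hf hg hh hfgh
  rw [lintegral_map hf hL, lintegral_map hg hL, lintegral_map hh hL]
  exact hμ ht₀ ht₁ (hf.comp hL) (hg.comp hL) (hh.comp hL) fun x y => by
    simpa using hfgh (L x) (L y)

theorem prod [SFinite μ] [SFinite ν] (hμ : IsLogConcave μ) (hν : IsLogConcave ν) :
    IsLogConcave (μ.prod ν) := by
  intro t ht₀ ht₁ f g h hf hg hh hfgh
  rw [lintegral_prod _ hf.aemeasurable, lintegral_prod _ hg.aemeasurable,
    lintegral_prod _ hh.aemeasurable]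
  exact hμ ht₀ ht₁ hf.lintegral_prod_right' hg.lintegral_prod_right' hh.lintegral_prod_right'
    fun x x' => hν ht₀ ht₁ (hf.comp measurable_prodMk_left) (hg.comp measurable_prodMk_left)
      (hh.comp measurable_prodMk_left) fun y y' => hfgh (x, y) (x', y')

end IsLogConcave

end LogConcave

theorem IsLogConcave.of_continuousLinearEquiv {E F : Type*} [NormedAddCommGroup E]
    [NormedSpace ℝ E] [MeasurableSpace E] [BorelSpace E] [NormedAddCommGroup F] [NormedSpace ℝ F]
    [FiniteDimensional ℝ F] [MeasurableSpace F] [BorelSpace F] {μ : Measure E} [μ.IsAddHaarMeasure]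
    (hμ : IsLogConcave μ) (e : E ≃L[ℝ] F) (ν : Measure F) [ν.IsAddHaarMeasure] :
    IsLogConcave ν := by
  have := e.isAddHaarMeasure_map μ
  rw [Measure.isAddLeftInvariant_eq_smul ν (μ.map e)]
  exact (hμ.map (L := e.toLinearMap) e.continuous.measurable).smul _

theorem isLogConcave_volume_pi (n : ℕ) : IsLogConcave (volume : Measure (Fin n → ℝ)) := by
  induction n with
  | zero =>
    intro t _ _ f g h _ _ _ hfgh
    have volume_univ : volume (Set.univ : Set (Fin 0 → ℝ)) = 1 := by simp [volume_pi]
    simp only [lintegral_unique, volume_univ, mul_one]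
    exact (hfgh _ _).trans_eq (congrArg h (Subsingleton.elim _ _))
  | succ n ih =>
    exact (isLogConcave_volume_real.prod ih).of_continuousLinearEquiv
      (Fin.consEquivL ℝ fun _ : Fin (n + 1) => ℝ) volume

theorem isLogConcave_of_isAddHaarMeasure {E : Type*} [NormedAddCommGroup E] [NormedSpace ℝ E]
    [FiniteDimensional ℝ E] [MeasurableSpace E] [BorelSpace E] (μ : Measure E)
    [μ.IsAddHaarMeasure] : IsLogConcave μ :=
  (isLogConcave_volume_pi (Module.finrank ℝ E)).of_continuousLinearEquiv
    (ContinuousLinearEquiv.ofFinrankEq (by simp)) μ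

/-! ### Entropy of superlevel sets -/

theorem two_mul_div_one_add_le_negMulLog {p : ℝ} (hp₀ : 0 ≤ p) (hp₁ : p ≤ 1) :
    2 * (p * (1 - p)) / (1 + p) ≤ Real.negMulLog p := by
  rcases hp₀.eq_or_lt with rfl | hp
  · simp
  have hlog := Real.le_log_one_add_of_nonneg (div_nonneg (sub_nonneg.2 hp₁) hp₀)
  rw [show 1 + (1 - p) / p = p⁻¹ by field_simp; ring, Real.log_inv] at hlog
  calc 2 * (p * (1 - p)) / (1 + p) = p * (2 * ((1 - p) / p) / ((1 - p) / p + 2)) := by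
        rw [show (1 - p) / p + 2 = (1 + p) / p by field_simp; ring]
        field_simp
    _ ≤ p * -Real.log p := by gcongr
    _ = Real.negMulLog p := by rw [Real.negMulLog]; ring

theorem mul_one_sub_le_binEntropy {p : ℝ} (hp₀ : 0 ≤ p) (hp₁ : p ≤ 1) :
    8 / 3 * (p * (1 - p)) ≤ Real.binEntropy p := by
  have hp₁' : 0 ≤ 1 - p := sub_nonneg.2 hp₁
  have h_left := two_mul_div_one_add_le_negMulLog hp₀ hp₁
  have h_right := two_mul_div_one_add_le_negMulLog hp₁' (sub_le_self 1 hp₀)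
  rw [sub_sub_cancel] at h_right
  rw [Real.binEntropy_eq_negMulLog_add_negMulLog_one_sub]
  have h_coeff : 8 / 3 ≤ 2 / (1 + p) + 2 / (1 + (1 - p)) := by
    rw [div_add_div _ _ (by positivity) (by positivity), le_div_iff₀ (by positivity)]
    nlinarith [sq_nonneg (2 * p - 1)]
  calc 8 / 3 * (p * (1 - p)) ≤ (2 / (1 + p) + 2 / (1 + (1 - p))) * (p * (1 - p)) := by gcongr
    _ = 2 * (p * (1 - p)) / (1 + p) + 2 * ((1 - p) * p) / (1 + (1 - p)) := by ring
    _ ≤ _ := add_le_add h_left h_right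

theorem add_mul_negMulLog_le_rpow {p : ℝ} (hp : 0 < p) (t : ℝ) :
    p + t * Real.negMulLog p ≤ p ^ (1 - t) := by
  calc p + t * Real.negMulLog p = p * (Real.log p * -t + 1) := by rw [Real.negMulLog]; ring
    _ ≤ p * p ^ (-t) := by
        rw [Real.rpow_def_of_pos hp]
        gcongr
        exact Real.add_one_le_exp _
    _ = p ^ (1 - t) := by rw [sub_eq_add_neg, Real.rpow_add hp, Real.rpow_one]

theorem measure_add_ofReal_negMulLog_le_rpow {X : Type*} [MeasurableSpace X] (ν : Measure X)
    [IsProbabilityMeasure ν] {t : ℝ} (ht₀ : 0 ≤ t) (A : Set X) :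
    ν A + ENNReal.ofReal t * ENNReal.ofReal (Real.negMulLog (ν.real A)) ≤ ν A ^ (1 - t) := by
  rcases eq_or_ne (ν A) 0 with hA | hA
  · simp [hA, measureReal_def]
  have hpos : 0 < ν.real A := ENNReal.toReal_pos hA (measure_ne_top _ _)
  have hentropy := Real.negMulLog_nonneg hpos.le (measureReal_le_one (μ := ν) (s := A))
  rw [← ofReal_measureReal (μ := ν) (s := A), ENNReal.ofReal_rpow_of_pos hpos,
    ← ENNReal.ofReal_mul ht₀, ← ENNReal.ofReal_add hpos.le (mul_nonneg ht₀ hentropy)]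
  exact ENNReal.ofReal_le_ofReal (add_mul_negMulLog_le_rpow hpos t)

theorem antitone_measure_lt {X : Type*} [MeasurableSpace X] (ν : Measure X) (u : X → ℝ) :
    Antitone fun s : ℝ => ν {x | s < u x} :=
  fun _ _ h => measure_mono fun _ hx => h.trans_lt hx

theorem lintegral_ofReal_sub_eq {X : Type*} [MeasurableSpace X] (ν : Measure X) [SFinite ν]
    {u w : X → ℝ} (hu : Measurable u) (hw : Measurable w) :
    ∫⁻ x, ENNReal.ofReal (w x - u x) ∂ν = ∫⁻ s, ν {x | u x ≤ s ∧ s < w x} := by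
  have hU : MeasurableSet {p : X × ℝ | u p.1 ≤ p.2 ∧ p.2 < w p.1} :=
    (measurableSet_le (hu.comp measurable_fst) measurable_snd).inter
      (measurableSet_lt measurable_snd (hw.comp measurable_fst))
  calc ∫⁻ x, ENNReal.ofReal (w x - u x) ∂ν
      = (ν.prod volume) {p : X × ℝ | u p.1 ≤ p.2 ∧ p.2 < w p.1} := by
        rw [Measure.prod_apply hU]
        exact lintegral_congr fun x => Real.volume_Ico.symm
    _ = ∫⁻ s, ν {x | u x ≤ s ∧ s < w x} := Measure.prod_apply_symm hU

theorem IsLogConcave.lintegral_negMulLog_le {E : Type*} [AddCommGroup E] [Module ℝ E]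
    [MeasurableSpace E] {ν : Measure E} [IsProbabilityMeasure ν] (hν : IsLogConcave ν)
    {Ω : Set E} (hΩ : MeasurableSet Ω) (hνΩ : ∀ᵐ x ∂ν, x ∈ Ω) {t : ℝ} (ht₀ : 0 < t) (ht₁ : t < 1)
    {u w : E → ℝ} (hu : Measurable u) (hw : Measurable w)
    (huw : ∀ x ∈ Ω, ∀ y ∈ Ω, u x ≤ w ((1 - t) • x + t • y)) :
    ENNReal.ofReal t * ∫⁻ s : ℝ, ENNReal.ofReal (Real.negMulLog (ν.real {x | s < u x})) ≤
      ∫⁻ x, ENNReal.ofReal (w x - u x) ∂ν := by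
  have hlevel (s : ℝ) :
      ENNReal.ofReal t * ENNReal.ofReal (Real.negMulLog (ν.real {x | s < u x})) ≤
        ν {x | u x ≤ s ∧ s < w x} := by
    have hA : MeasurableSet {x | s < u x} := measurableSet_lt measurable_const hu
    refine (ENNReal.add_le_add_iff_left (measure_ne_top ν {x | s < u x})).1 ?_
    calc ν {x | s < u x} +
          ENNReal.ofReal t * ENNReal.ofReal (Real.negMulLog (ν.real {x | s < u x}))
        ≤ ν {x | s < u x} ^ (1 - t) := measure_add_ofReal_negMulLog_le_rpow ν ht₀.le _
      _ = ν ({x | s < u x} ∩ Ω) ^ (1 - t) * ν Ω ^ t := by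
          rw [prob_compl_eq_zero_iff hΩ |>.1 hνΩ, ENNReal.one_rpow, mul_one,
            measure_inter_conull (t := Ω) hνΩ]
      _ ≤ ν {x | s < w x} := by
          refine hν.measure_rpow_mul_le ht₀ ht₁ (hA.inter hΩ) hΩ
            (measurableSet_lt measurable_const hw) ?_
          exact fun x hx y hy => hx.1.trans_le (huw x hx.2 y hy)
      _ ≤ ν ({x | s < u x} ∪ {x | u x ≤ s ∧ s < w x}) :=
          measure_mono fun x hx => (lt_or_ge s (u x)).imp_right fun h => ⟨h, hx⟩
      _ ≤ ν {x | s < u x} + ν {x | u x ≤ s ∧ s < w x} := measure_union_le _ _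
  rw [← lintegral_const_mul' _ _ ENNReal.ofReal_ne_top, lintegral_ofReal_sub_eq ν hu hw]
  exact lintegral_mono hlevel

theorem exists_dist_le_norm_fderiv_add_mul {E F : Type*} [NormedAddCommGroup E]
    [NormedSpace ℝ E] [NormedAddCommGroup F] [NormedSpace ℝ F] {Ω : Set E} (hΩ : Convex ℝ Ω)
    {u : E → F} (hu : Differentiable ℝ u) (hu' : UniformContinuousOn (fderiv ℝ u) Ω) {η : ℝ}
    (hη : 0 < η) :
    ∃ δ > 0, ∀ x ∈ Ω, ∀ z ∈ Ω, dist x z < δ →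
      dist (u x) (u z) ≤ (‖fderiv ℝ u z‖ + η) * dist x z := by
  obtain ⟨δ, hδ, hδu⟩ := Metric.uniformContinuousOn_iff.1 hu' η hη
  refine ⟨δ, hδ, fun x hx z hz hxz => ?_⟩
  have hbound : ∀ y ∈ Ω ∩ Metric.ball z δ, ‖fderiv ℝ u y‖ ≤ ‖fderiv ℝ u z‖ + η := by
    intro y hy
    have hyz := (hδu y hy.1 z hz hy.2).le
    rw [dist_eq_norm] at hyz
    exact (norm_le_norm_add_norm_sub' _ _).trans (by gcongr)
  simpa only [dist_eq_norm] using
    (hΩ.inter (convex_ball z δ)).norm_image_sub_le_of_norm_fderiv_le (fun y _ => hu y) hbound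
      ⟨hz, Metric.mem_ball_self hδ⟩ ⟨hx, hxz⟩

/-! ### The Poincaré inequality for log-concave measures -/

theorem lintegral_lintegral_enorm_sub_eq {X : Type*} [MeasurableSpace X] (ν : Measure X)
    [SFinite ν] {g : X → ℝ} (hg : Measurable g) :
    ∫⁻ x, ∫⁻ y, ‖g x - g y‖ₑ ∂ν ∂ν =
      2 * ∫⁻ s : ℝ, ν {x | s < g x} * ν {x | g x ≤ s} := by
  have hg₁ : Measurable fun p : X × X => g p.1 := hg.comp measurable_fst
  have hg₂ : Measurable fun p : X × X => g p.2 := hg.comp measurable_snd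
  have enorm_sub_eq (a b : ℝ) : ‖a - b‖ₑ = ENNReal.ofReal (a - b) + ENNReal.ofReal (b - a) := by
    rcases le_total a b with h | h <;>
      simp [Real.enorm_eq_ofReal_abs, abs_of_nonneg, abs_of_nonpos, ENNReal.ofReal_of_nonpos, h]
  have h_left : ∫⁻ p, ENNReal.ofReal (g p.1 - g p.2) ∂ν.prod ν =
      ∫⁻ s : ℝ, ν {x | s < g x} * ν {x | g x ≤ s} := by
    rw [lintegral_ofReal_sub_eq _ hg₂ hg₁]
    refine lintegral_congr fun s => ?_
    rw [← Measure.prod_prod]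
    congr 1 with p
    exact and_comm
  have h_right : ∫⁻ p, ENNReal.ofReal (g p.2 - g p.1) ∂ν.prod ν =
      ∫⁻ s : ℝ, ν {x | s < g x} * ν {x | g x ≤ s} := by
    rw [← h_left, ← lintegral_prod_swap]
    rfl
  calc ∫⁻ x, ∫⁻ y, ‖g x - g y‖ₑ ∂ν ∂ν = ∫⁻ p, ‖g p.1 - g p.2‖ₑ ∂ν.prod ν :=
        (lintegral_prod _ (hg₁.sub hg₂).enorm.aemeasurable).symm
    _ = ∫⁻ p, ENNReal.ofReal (g p.1 - g p.2) ∂ν.prod ν +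
          ∫⁻ p, ENNReal.ofReal (g p.2 - g p.1) ∂ν.prod ν := by
        simp only [enorm_sub_eq]
        exact lintegral_add_left (hg₁.sub hg₂).ennreal_ofReal _
    _ = 2 * ∫⁻ s : ℝ, ν {x | s < g x} * ν {x | g x ≤ s} := by rw [h_left, h_right, two_mul]

theorem lintegral_enorm_sub_integral_le_lintegral_lintegral {X F : Type*} [MeasurableSpace X]
    [NormedAddCommGroup F] [NormedSpace ℝ F] [CompleteSpace F] {ν : Measure X}
    [IsProbabilityMeasure ν] {g : X → F} (hg : Integrable g ν) :
    ∫⁻ x, ‖g x - ∫ y, g y ∂ν‖ₑ ∂ν ≤ ∫⁻ x, ∫⁻ y, ‖g x - g y‖ₑ ∂ν ∂ν := by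
  refine lintegral_mono fun x => ?_
  calc ‖g x - ∫ y, g y ∂ν‖ₑ = ‖∫ y, (g x - g y) ∂ν‖ₑ := by
        rw [integral_sub (integrable_const _) hg, integral_const, probReal_univ, one_smul]
    _ ≤ ∫⁻ y, ‖g x - g y‖ₑ ∂ν := enorm_integral_le_lintegral_enorm _

section Poincare

variable {E : Type*} [NormedAddCommGroup E] [NormedSpace ℝ E] [ProperSpace E] [MeasurableSpace E]
  [BorelSpace E] {ν : Measure E} [IsProbabilityMeasure ν] {Ω : Set E} {g : E → ℝ}

namespace IsLogConcave

theorem lintegral_negMulLog_le_diam_mul_add (hν : IsLogConcave ν) (hΩ : MeasurableSet Ω)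
    (hΩ_bdd : Bornology.IsBounded Ω) (hΩ_conv : Convex ℝ Ω) (hνΩ : ∀ᵐ x ∂ν, x ∈ Ω)
    (hg : ContDiff ℝ 1 g) {η : ℝ} (hη : 0 < η) :
    ∫⁻ s : ℝ, ENNReal.ofReal (Real.negMulLog (ν.real {x | s < g x})) ≤
      ENNReal.ofReal (Metric.diam Ω) * (∫⁻ x, ‖fderiv ℝ g x‖ₑ ∂ν + ENNReal.ofReal η) := by
  have hg' : Continuous (fderiv ℝ g) := hg.continuous_fderiv one_ne_zero
  obtain ⟨δ, hδ, hδg⟩ := exists_dist_le_norm_fderiv_add_mul hΩ_conv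
    (hg.differentiable one_ne_zero) ((hΩ_bdd.isCompact_closure.uniformContinuousOn_of_continuous
      hg'.continuousOn).mono subset_closure) hη
  obtain ⟨c, hc, hcδ⟩ := exists_pos_mul_lt hδ (Metric.diam Ω)
  obtain ⟨t, ht₀, ht⟩ := exists_between (lt_min hc one_pos)
  obtain ⟨htc, ht₁⟩ := lt_min_iff.1 ht
  let w (z : E) : ℝ := g z + t * (Metric.diam Ω * (‖fderiv ℝ g z‖ + η))
  have hw : Continuous w := by fun_prop
  have hgw : ∀ x ∈ Ω, ∀ y ∈ Ω, g x ≤ w ((1 - t) • x + t • y) := by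
    intro x hx y hy
    set z := (1 - t) • x + t • y with hz
    have hzΩ : z ∈ Ω := hΩ_conv hx hy (sub_nonneg.2 ht₁.le) ht₀.le (sub_add_cancel 1 t)
    have hxz : dist x z ≤ Metric.diam Ω * t := by
      rw [dist_eq_norm, hz, show x - ((1 - t) • x + t • y) = t • (x - y) by module, norm_smul,
        Real.norm_of_nonneg ht₀.le, ← dist_eq_norm, mul_comm]
      gcongr
      exact Metric.dist_le_diam_of_mem hΩ_bdd hx hy
    have hxzδ : dist x z < δ := (hxz.trans (by gcongr)).trans_lt hcδ
    calc g x ≤ g z + dist (g x) (g z) := by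
          rw [Real.dist_eq]
          linarith [le_abs_self (g x - g z)]
      _ ≤ g z + (‖fderiv ℝ g z‖ + η) * (Metric.diam Ω * t) := by
          gcongr
          exact (hδg x hx z hzΩ hxzδ).trans (by gcongr)
      _ = w z := by ring
  have hwg (x : E) : ENNReal.ofReal (w x - g x) =
      ENNReal.ofReal t * (ENNReal.ofReal (Metric.diam Ω) *
        (‖fderiv ℝ g x‖ₑ + ENNReal.ofReal η)) := by
    rw [add_sub_cancel_left, ENNReal.ofReal_mul ht₀.le, ENNReal.ofReal_mul Metric.diam_nonneg,
      ENNReal.ofReal_add (norm_nonneg _) hη.le, ofReal_norm]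
  have hentropy := hν.lintegral_negMulLog_le hΩ hνΩ ht₀ ht₁ hg.continuous.measurable
    hw.measurable hgw
  simp only [hwg] at hentropy
  rw [lintegral_const_mul' _ _ ENNReal.ofReal_ne_top,
    lintegral_const_mul' _ _ ENNReal.ofReal_ne_top, lintegral_add_right _ measurable_const,
    lintegral_const, measure_univ, mul_one] at hentropy
  exact (ENNReal.mul_le_mul_iff_right (by simpa using ht₀) ENNReal.ofReal_ne_top).1 hentropy

theorem lintegral_negMulLog_le_diam_mul (hν : IsLogConcave ν) (hΩ : MeasurableSet Ω)
    (hΩ_bdd : Bornology.IsBounded Ω) (hΩ_conv : Convex ℝ Ω) (hνΩ : ∀ᵐ x ∂ν, x ∈ Ω)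
    (hg : ContDiff ℝ 1 g) :
    ∫⁻ s : ℝ, ENNReal.ofReal (Real.negMulLog (ν.real {x | s < g x})) ≤
      ENNReal.ofReal (Metric.diam Ω) * ∫⁻ x, ‖fderiv ℝ g x‖ₑ ∂ν := by
  have hlim : Tendsto (fun η : ℝ => ENNReal.ofReal (Metric.diam Ω) *
      (∫⁻ x, ‖fderiv ℝ g x‖ₑ ∂ν + ENNReal.ofReal η)) (𝓝[>] 0)
      (𝓝 (ENNReal.ofReal (Metric.diam Ω) *
        (∫⁻ x, ‖fderiv ℝ g x‖ₑ ∂ν + ENNReal.ofReal 0))) :=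
    ENNReal.Tendsto.const_mul (tendsto_const_nhds.add
      ((ENNReal.continuous_ofReal.tendsto 0).mono_left nhdsWithin_le_nhds))
      (Or.inr ENNReal.ofReal_ne_top)
  rw [ENNReal.ofReal_zero, add_zero] at hlim
  exact ge_of_tendsto hlim (eventually_nhdsWithin_of_forall fun η hη =>
    hν.lintegral_negMulLog_le_diam_mul_add hΩ hΩ_bdd hΩ_conv hνΩ hg hη)

theorem lintegral_binEntropy_le_diam_mul (hν : IsLogConcave ν) (hΩ : MeasurableSet Ω)
    (hΩ_bdd : Bornology.IsBounded Ω) (hΩ_conv : Convex ℝ Ω) (hνΩ : ∀ᵐ x ∂ν, x ∈ Ω)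
    (hg : ContDiff ℝ 1 g) :
    ∫⁻ s : ℝ, ENNReal.ofReal (Real.binEntropy (ν.real {x | s < g x})) ≤
      2 * (ENNReal.ofReal (Metric.diam Ω) * ∫⁻ x, ‖fderiv ℝ g x‖ₑ ∂ν) := by
  have hg_meas : Measurable g := hg.continuous.measurable
  have h_upper := hν.lintegral_negMulLog_le_diam_mul hΩ hΩ_bdd hΩ_conv hνΩ hg
  have h_lower := hν.lintegral_negMulLog_le_diam_mul hΩ hΩ_bdd hΩ_conv hνΩ hg.neg
  simp only [fderiv_fun_neg, enorm_neg] at h_lower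
  rw [← lintegral_neg_eq_self] at h_lower
  simp only [neg_lt_neg_iff] at h_lower
  have h_compl : (fun s : ℝ => ν.real {x | g x < s}) =ᵐ[volume]
      fun s => 1 - ν.real {x | s < g x} := by
    filter_upwards [meas_le_ae_eq_meas_lt ν volume g] with s hs
    rw [measureReal_def ν {x | s < g x}, ← hs, ← measureReal_def,
      ← probReal_compl_eq_one_sub (measurableSet_le measurable_const hg_meas)]
    congr 1 with x
    simp
  calc ∫⁻ s : ℝ, ENNReal.ofReal (Real.binEntropy (ν.real {x | s < g x}))
      = ∫⁻ s : ℝ, (ENNReal.ofReal (Real.negMulLog (ν.real {x | s < g x})) +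
          ENNReal.ofReal (Real.negMulLog (ν.real {x | g x < s}))) := by
        refine lintegral_congr_ae ?_
        filter_upwards [h_compl] with s hs
        rw [Real.binEntropy_eq_negMulLog_add_negMulLog_one_sub, hs, ENNReal.ofReal_add]
        · exact Real.negMulLog_nonneg measureReal_nonneg measureReal_le_one
        · exact Real.negMulLog_nonneg (sub_nonneg.2 measureReal_le_one)
            (sub_le_self 1 measureReal_nonneg)
    _ = (∫⁻ s : ℝ, ENNReal.ofReal (Real.negMulLog (ν.real {x | s < g x}))) +
          ∫⁻ s : ℝ, ENNReal.ofReal (Real.negMulLog (ν.real {x | g x < s})) := by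
        refine lintegral_add_left (Measurable.ennreal_ofReal ?_) _
        exact Real.continuous_negMulLog.measurable.comp
          (antitone_measure_lt ν g).measurable.ennreal_toReal
    _ ≤ _ := (add_le_add h_upper h_lower).trans_eq (two_mul _).symm

theorem lintegral_enorm_sub_integral_le (hν : IsLogConcave ν) (hΩ : MeasurableSet Ω)
    (hΩ_bdd : Bornology.IsBounded Ω) (hΩ_conv : Convex ℝ Ω) (hνΩ : ∀ᵐ x ∂ν, x ∈ Ω)
    (hg : ContDiff ℝ 1 g) :
    ∫⁻ x, ‖g x - ∫ y, g y ∂ν‖ₑ ∂ν ≤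
      ENNReal.ofReal (3 / 2 * Metric.diam Ω) * ∫⁻ x, ‖fderiv ℝ g x‖ₑ ∂ν := by
  have hg_meas : Measurable g := hg.continuous.measurable
  obtain ⟨M, hM⟩ := hΩ_bdd.isCompact_closure.exists_bound_of_continuousOn hg.continuous.continuousOn
  have hg_int : Integrable g ν := Integrable.of_bound hg_meas.aestronglyMeasurable M
    (hνΩ.mono fun x hx => hM x (subset_closure hx))
  have hlevel (s : ℝ) : 2 * (ν {x | s < g x} * ν {x | g x ≤ s}) ≤
      ENNReal.ofReal (3 / 4) * ENNReal.ofReal (Real.binEntropy (ν.real {x | s < g x})) := by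
    have h_compl : ν.real {x | g x ≤ s} = 1 - ν.real {x | s < g x} := by
      rw [← probReal_compl_eq_one_sub (measurableSet_lt measurable_const hg_meas)]
      congr 1 with x
      simp
    rw [← ofReal_measureReal, ← ofReal_measureReal, ← ENNReal.ofReal_mul measureReal_nonneg,
      ← ENNReal.ofReal_ofNat 2, ← ENNReal.ofReal_mul zero_le_two,
      ← ENNReal.ofReal_mul (by norm_num), h_compl]
    refine ENNReal.ofReal_le_ofReal ?_
    linarith [mul_one_sub_le_binEntropy (measureReal_nonneg (μ := ν) (s := {x | s < g x}))
      measureReal_le_one]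
  calc ∫⁻ x, ‖g x - ∫ y, g y ∂ν‖ₑ ∂ν ≤ ∫⁻ x, ∫⁻ y, ‖g x - g y‖ₑ ∂ν ∂ν :=
        lintegral_enorm_sub_integral_le_lintegral_lintegral hg_int
    _ = 2 * ∫⁻ s : ℝ, ν {x | s < g x} * ν {x | g x ≤ s} :=
        lintegral_lintegral_enorm_sub_eq ν hg_meas
    _ ≤ ENNReal.ofReal (3 / 4) *
          ∫⁻ s : ℝ, ENNReal.ofReal (Real.binEntropy (ν.real {x | s < g x})) := by
        rw [← lintegral_const_mul' _ _ (by simp), ← lintegral_const_mul' _ _ (by simp)]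
        exact lintegral_mono hlevel
    _ ≤ ENNReal.ofReal (3 / 4) *
          (2 * (ENNReal.ofReal (Metric.diam Ω) * ∫⁻ x, ‖fderiv ℝ g x‖ₑ ∂ν)) := by
        gcongr
        exact hν.lintegral_binEntropy_le_diam_mul hΩ hΩ_bdd hΩ_conv hνΩ hg
    _ = ENNReal.ofReal (3 / 2 * Metric.diam Ω) * ∫⁻ x, ‖fderiv ℝ g x‖ₑ ∂ν := by
        rw [← ENNReal.ofReal_ofNat 2, ← mul_assoc, ← mul_assoc,
          ← ENNReal.ofReal_mul (by norm_num), ← ENNReal.ofReal_mul (by norm_num)]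
        norm_num

end IsLogConcave

end Poincare

theorem IsLogConcave.setLIntegral_enorm_sub_setAverage_le {E : Type*} [NormedAddCommGroup E]
    [NormedSpace ℝ E] [ProperSpace E] [MeasurableSpace E] [BorelSpace E] {μ : Measure E}
    (hμ : IsLogConcave μ) {Ω : Set E} (hΩ : MeasurableSet Ω) (hΩ_bdd : Bornology.IsBounded Ω)
    (hΩ_conv : Convex ℝ Ω) (hμΩ : μ Ω ≠ ⊤) {g : E → ℝ} (hg : ContDiff ℝ 1 g) :
    ∫⁻ x in Ω, ‖g x - ⨍ y in Ω, g y ∂μ‖ₑ ∂μ ≤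
      ENNReal.ofReal (3 / 2 * Metric.diam Ω) * ∫⁻ x in Ω, ‖fderiv ℝ g x‖ₑ ∂μ := by
  rcases eq_or_ne (μ Ω) 0 with hμΩ₀ | hμΩ₀
  · simp [Measure.restrict_eq_zero.2 hμΩ₀]
  have : IsProbabilityMeasure (μ[|Ω]) :=
    ProbabilityTheory.cond_isProbabilityMeasure_of_finite hμΩ₀ hμΩ
  have hcond : IsLogConcave (μ[|Ω]) := (hμ.restrict hΩ_conv hΩ).smul _
  have hpoincare := hcond.lintegral_enorm_sub_integral_le hΩ hΩ_bdd hΩ_conv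
    (ProbabilityTheory.ae_cond_mem hΩ) hg
  rw [ProbabilityTheory.cond, ← setAverage_eq', lintegral_smul_measure, lintegral_smul_measure,
    smul_eq_mul, smul_eq_mul, mul_left_comm] at hpoincare
  exact (ENNReal.mul_le_mul_iff_right (ENNReal.inv_ne_zero.2 hμΩ)
    (ENNReal.inv_ne_top.2 hμΩ₀)).1 hpoincare

/-! ### Mollification of weakly differentiable functions -/

section Convolution

variable {E F : Type*} [NormedAddCommGroup E] [NormedSpace ℝ E] [FiniteDimensional ℝ E]
  [MeasurableSpace E] [BorelSpace E] {μ : Measure E} [μ.IsAddHaarMeasure]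
  [NormedAddCommGroup F]

theorem tendsto_lintegral_enorm_comp_sub_right_sub {f : E → F} (hf : Integrable f μ) :
    Tendsto (fun y => ∫⁻ x, ‖f (x - y) - f x‖ₑ ∂μ) (𝓝 0) (𝓝 0) := by
  have hf_mem : MemLp f 1 μ := memLp_one_iff_integrable.2 hf
  let translate (y : E) : C(E, E) := ⟨fun x => x - y, by fun_prop⟩
  have h_translate (y : E) : MeasurePreserving (translate y) μ μ := measurePreserving_sub_right μ y
  have h_cont : Continuous translate := ContinuousMap.continuous_of_continuous_uncurry _
    (continuous_snd.sub continuous_fst)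
  have h_lim := (tendsto_const_nhds (x := hf_mem.toLp f)).compMeasurePreservingLp
    (h_cont.tendsto 0) h_translate (h_translate 0) ENNReal.one_ne_top
  rw [tendsto_iff_edist_tendsto_0] at h_lim
  simpa [Lp.toLp_compMeasurePreserving, Lp.edist_toLp_toLp, eLpNorm_one_eq_lintegral_enorm,
    translate] using h_lim

variable [NormedSpace ℝ F]

theorem lintegral_enorm_convolution_le {E₁ E₂ : Type*} [NormedAddCommGroup E₁] [NormedSpace ℝ E₁]
    [NormedAddCommGroup E₂] [NormedSpace ℝ E₂] (L : E₁ →L[ℝ] E₂ →L[ℝ] F) {f : E → E₁} {g : E → E₂}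
    (hf : AEStronglyMeasurable f μ) (hg : AEStronglyMeasurable g μ) :
    ∫⁻ x, ‖(f ⋆[L, μ] g) x‖ₑ ∂μ ≤ ‖L‖ₑ * (∫⁻ x, ‖f x‖ₑ ∂μ) * ∫⁻ x, ‖g x‖ₑ ∂μ := by
  have hg_sub (y : E) : AEMeasurable (fun x => ‖g (x - y)‖ₑ) μ :=
    (hg.comp_measurePreserving (measurePreserving_sub_right μ y)).enorm
  calc ∫⁻ x, ‖(f ⋆[L, μ] g) x‖ₑ ∂μ ≤ ∫⁻ x, ∫⁻ y, ‖L (f y) (g (x - y))‖ₑ ∂μ ∂μ :=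
        lintegral_mono fun _ => enorm_integral_le_lintegral_enorm _
    _ = ∫⁻ y, ∫⁻ x, ‖L (f y) (g (x - y))‖ₑ ∂μ ∂μ :=
        lintegral_lintegral_swap (hf.convolution_integrand L hg).enorm
    _ ≤ ∫⁻ y, ∫⁻ x, ‖L‖ₑ * ‖f y‖ₑ * ‖g (x - y)‖ₑ ∂μ ∂μ :=
        lintegral_mono fun _ => lintegral_mono fun _ => L.le_opENorm₂ _ _
    _ = ∫⁻ y, ‖L‖ₑ * ‖f y‖ₑ * ∫⁻ x, ‖g x‖ₑ ∂μ ∂μ := by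
        refine lintegral_congr fun y => ?_
        rw [lintegral_const_mul'' _ (hg_sub y), lintegral_sub_right_eq_self (fun x => ‖g x‖ₑ)]
    _ = ‖L‖ₑ * (∫⁻ x, ‖f x‖ₑ ∂μ) * ∫⁻ x, ‖g x‖ₑ ∂μ := by
        rw [lintegral_mul_const'' _ (hf.enorm.const_mul _), lintegral_const_mul'' _ hf.enorm]

theorem lintegral_enorm_contDiffBump_normed (φ : ContDiffBump (0 : E)) :
    ∫⁻ x, ‖φ.normed μ x‖ₑ ∂μ = 1 := by
  rw [← ofReal_integral_norm_eq_lintegral_enorm φ.integrable_normed]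
  simp only [Real.norm_of_nonneg (φ.nonneg_normed _), φ.integral_normed, ENNReal.ofReal_one]

theorem lintegral_enorm_normed_convolution_le (φ : ContDiffBump (0 : E)) {f : E → F}
    (hf : AEStronglyMeasurable f μ) :
    ∫⁻ x, ‖(φ.normed μ ⋆[ContinuousLinearMap.lsmul ℝ ℝ, μ] f) x‖ₑ ∂μ ≤ ∫⁻ x, ‖f x‖ₑ ∂μ := by
  have h_norm : ‖(ContinuousLinearMap.lsmul ℝ ℝ : ℝ →L[ℝ] F →L[ℝ] F)‖ₑ ≤ 1 := by
    simpa [enorm_eq_nnnorm] using! ContinuousLinearMap.opNNNorm_lsmul_le (𝕜 := ℝ) (R := ℝ) (E := F)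
  have h_young := lintegral_enorm_convolution_le (ContinuousLinearMap.lsmul ℝ ℝ)
    (φ.continuous_normed (μ := μ)).aestronglyMeasurable hf
  rw [lintegral_enorm_contDiffBump_normed, mul_one] at h_young
  exact h_young.trans (mul_le_of_le_one_left zero_le h_norm)

theorem lintegral_enorm_normed_convolution_sub_le [CompleteSpace F] (φ : ContDiffBump (0 : E))
    {f : E → F} (hf : Integrable f μ) {ε : ℝ≥0∞}
    (hε : ∀ y ∈ Metric.ball 0 φ.rOut, ∫⁻ x, ‖f (x - y) - f x‖ₑ ∂μ ≤ ε) :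
    ∫⁻ x, ‖(φ.normed μ ⋆[ContinuousLinearMap.lsmul ℝ ℝ, μ] f) x - f x‖ₑ ∂μ ≤ ε := by
  have h_conv (x : E) : (φ.normed μ ⋆[ContinuousLinearMap.lsmul ℝ ℝ, μ] f) x - f x =
      ∫ y, φ.normed μ y • (f (x - y) - f x) ∂μ := by
    have h_exists : Integrable (fun y => φ.normed μ y • f (x - y)) μ :=
      φ.hasCompactSupport_normed.convolutionExists_left (ContinuousLinearMap.lsmul ℝ ℝ)
        φ.continuous_normed hf.locallyIntegrable x
    simp only [smul_sub]
    rw [integral_sub h_exists ((φ.integrable_normed (μ := μ)).smul_const (f x)),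
      integral_smul_const, φ.integral_normed, one_smul]
    rfl
  have h_meas : AEMeasurable (fun p : E × E => ‖φ.normed μ p.2‖ₑ * ‖f (p.1 - p.2) - f p.1‖ₑ)
      (μ.prod μ) := by
    have hφ_meas : Measurable (φ.normed μ) := φ.continuous_normed.measurable
    exact (hφ_meas.comp measurable_snd).enorm.aemeasurable.mul ((hf.1.comp_quasiMeasurePreserving
      (quasiMeasurePreserving_sub_of_right_invariant μ μ)).sub hf.1.comp_fst).enorm
  calc ∫⁻ x, ‖(φ.normed μ ⋆[ContinuousLinearMap.lsmul ℝ ℝ, μ] f) x - f x‖ₑ ∂μ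
      ≤ ∫⁻ x, ∫⁻ y, ‖φ.normed μ y‖ₑ * ‖f (x - y) - f x‖ₑ ∂μ ∂μ := by
        refine lintegral_mono fun x => ?_
        simp only [h_conv, ← enorm_smul]
        exact enorm_integral_le_lintegral_enorm _
    _ = ∫⁻ y, ‖φ.normed μ y‖ₑ * ∫⁻ x, ‖f (x - y) - f x‖ₑ ∂μ ∂μ := by
        rw [lintegral_lintegral_swap h_meas]
        exact lintegral_congr fun y => lintegral_const_mul' _ _ enorm_ne_top
    _ ≤ ∫⁻ y, ‖φ.normed μ y‖ₑ * ε ∂μ := by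
        refine lintegral_mono fun y => ?_
        by_cases hy : y ∈ Metric.ball 0 φ.rOut
        · exact mul_le_mul_right (hε y hy) _
        · have : φ.normed μ y = 0 := by
            rwa [← Function.notMem_support, φ.support_normed_eq]
          simp [this]
    _ = ε := by
        rw [lintegral_mul_const _ φ.continuous_normed.measurable.enorm,
          lintegral_enorm_contDiffBump_normed, one_mul]

theorem exists_lintegral_enorm_normed_convolution_sub_le [CompleteSpace F] {f : E → F}
    (hf : Integrable f μ) {ε : ℝ≥0∞} (hε : ε ≠ 0) :
    ∃ φ : ContDiffBump (0 : E),
      ∫⁻ x, ‖(φ.normed μ ⋆[ContinuousLinearMap.lsmul ℝ ℝ, μ] f) x - f x‖ₑ ∂μ ≤ ε := by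
  obtain ⟨δ, hδ, hδε⟩ := Metric.eventually_nhds_iff_ball.1
    ((tendsto_lintegral_enorm_comp_sub_right_sub hf).eventually_le_const (pos_iff_ne_zero.2 hε))
  exact ⟨⟨δ / 2, δ, half_pos hδ, half_lt_self hδ⟩,
    lintegral_enorm_normed_convolution_sub_le _ hf hδε⟩

end Convolution

section WeakDerivative

variable {E F : Type*} [NormedAddCommGroup E] [NormedSpace ℝ E] [MeasurableSpace E]
  [NormedAddCommGroup F] [NormedSpace ℝ F]

/-- `f'` is a weak (distributional) derivative of `f` with respect to `μ`. The definition is meant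
for locally integrable `f` and `f'`, since otherwise the integrals take junk values. -/
def HasWeakFDeriv (f : E → F) (f' : E → E →L[ℝ] F) (μ : Measure E) : Prop :=
  ∀ φ : E → ℝ, ContDiff ℝ ∞ φ → HasCompactSupport φ →
    ∀ v, ∫ x, fderiv ℝ φ x v • f x ∂μ = -∫ x, φ x • f' x v ∂μ

variable [FiniteDimensional ℝ E] [BorelSpace E] {μ : Measure E} [μ.IsAddHaarMeasure]

theorem hasWeakFDeriv_fderiv {f : E → F} (hf : Differentiable ℝ f)
    (hf' : LocallyIntegrable (fderiv ℝ f) μ) : HasWeakFDeriv f (fderiv ℝ f) μ := by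
  intro φ hφ hφ_supp v
  have hφ_cont' : Continuous fun x => fderiv ℝ φ x v := by fun_prop (disch := simp)
  have hφ_supp' : HasCompactSupport fun x => fderiv ℝ φ x v :=
    hφ_supp.fderiv_apply ℝ v
  have hf_loc : LocallyIntegrable f μ := hf.continuous.locallyIntegrable
  have hf_loc' : LocallyIntegrable (fun x => fderiv ℝ f x v) μ := fun x =>
    (hf' x).imp fun _ h => h.imp_right fun h' =>
      (ContinuousLinearMap.apply ℝ F v).integrable_comp h'
  rw [integral_smul_fderiv_eq_neg_fderiv_smul_of_integrable
    (hf_loc.integrable_smul_left_of_hasCompactSupport hφ_cont' hφ_supp')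
    (hf_loc'.integrable_smul_left_of_hasCompactSupport hφ.continuous hφ_supp)
    (hf_loc.integrable_smul_left_of_hasCompactSupport hφ.continuous hφ_supp)
    (fun x _ => hφ.differentiable (by simp) x) (fun x _ => hf x), neg_neg]

theorem HasWeakFDeriv.hasFDerivAt_convolution [CompleteSpace F] {f : E → F} {f' : E → E →L[ℝ] F}
    (h : HasWeakFDeriv f f' μ) (hf : LocallyIntegrable f μ) (hf' : LocallyIntegrable f' μ)
    {ψ : E → ℝ} (hψ : ContDiff ℝ ∞ ψ) (hψ_supp : HasCompactSupport ψ) (x : E) :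
    HasFDerivAt (ψ ⋆[ContinuousLinearMap.lsmul ℝ ℝ, μ] f)
      ((ψ ⋆[ContinuousLinearMap.lsmul ℝ ℝ, μ] f') x) x := by
  have hψ₁ : ContDiff ℝ 1 ψ := hψ.of_le (by simp)
  convert! hψ_supp.hasFDerivAt_convolution_left (ContinuousLinearMap.lsmul ℝ ℝ) hψ₁ hf x using 1
  let φ (z : E) : ℝ := ψ (x - z)
  have hφ : ContDiff ℝ ∞ φ := hψ.comp (contDiff_const.sub contDiff_id)
  have hφ_supp : HasCompactSupport φ := hψ_supp.comp_homeomorph (Homeomorph.subLeft x)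
  have hφ' (z v : E) : fderiv ℝ φ z v = -fderiv ℝ ψ (x - z) v := by
    have h_comp : HasFDerivAt φ _ z := (hψ₁.differentiable one_ne_zero (x - z)).hasFDerivAt.comp z
      ((hasFDerivAt_id z).const_sub x)
    simp [h_comp.fderiv]
  ext v
  have h_int : Integrable (fun y => ψ y • f' (x - y)) μ := hψ_supp.convolutionExists_left
    (ContinuousLinearMap.lsmul ℝ ℝ) hψ.continuous hf' x
  have h_int' := (hψ_supp.fderiv ℝ).convolutionExists_left
    ((ContinuousLinearMap.lsmul ℝ ℝ : ℝ →L[ℝ] F →L[ℝ] F).precompL E)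
    (hψ₁.continuous_fderiv one_ne_zero) hf x
  calc (ψ ⋆[ContinuousLinearMap.lsmul ℝ ℝ, μ] f') x v = ∫ y, ψ y • f' (x - y) v ∂μ :=
        ContinuousLinearMap.integral_apply h_int v
    _ = ∫ z, φ z • f' z v ∂μ := by
        rw [← integral_sub_left_eq_self _ μ x]
        simp only [φ, sub_sub_cancel]
    _ = ∫ z, fderiv ℝ ψ (x - z) v • f z ∂μ := by
        rw [← neg_eq_iff_eq_neg.2 (h φ hφ hφ_supp v), ← integral_neg]
        simp only [hφ', neg_smul, neg_neg]
    _ = ∫ y, fderiv ℝ ψ y v • f (x - y) ∂μ := by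
        rw [← integral_sub_left_eq_self _ μ x]
        simp only [sub_sub_cancel]
    _ = _ := (ContinuousLinearMap.integral_apply h_int' v).symm

theorem HasWeakFDeriv.exists_contDiff_lintegral_enorm_sub_le [CompleteSpace F] {f : E → F}
    {f' : E → E →L[ℝ] F} (h : HasWeakFDeriv f f' μ) (hf : Integrable f μ) (hf' : Integrable f' μ)
    {ε : ℝ≥0∞} (hε : ε ≠ 0) :
    ∃ g : E → F, ContDiff ℝ 1 g ∧ ∫⁻ x, ‖g x - f x‖ₑ ∂μ ≤ ε ∧
      ∫⁻ x, ‖fderiv ℝ g x‖ₑ ∂μ ≤ ∫⁻ x, ‖f' x‖ₑ ∂μ := by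
  obtain ⟨φ, hφ⟩ := exists_lintegral_enorm_normed_convolution_sub_le hf hε
  have h_fderiv : fderiv ℝ (φ.normed μ ⋆[ContinuousLinearMap.lsmul ℝ ℝ, μ] f) =
      φ.normed μ ⋆[ContinuousLinearMap.lsmul ℝ ℝ, μ] f' :=
    funext fun x => (h.hasFDerivAt_convolution hf.locallyIntegrable hf'.locallyIntegrable
      φ.contDiff_normed φ.hasCompactSupport_normed x).fderiv
  refine ⟨φ.normed μ ⋆[ContinuousLinearMap.lsmul ℝ ℝ, μ] f,
    φ.hasCompactSupport_normed.contDiff_convolution_left _ φ.contDiff_normed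
    hf.locallyIntegrable, hφ, ?_⟩
  rw [h_fderiv]
  exact lintegral_enorm_normed_convolution_le φ hf'.1

end WeakDerivative

/-! ### Averages over convex cells -/

section Average

variable {X F : Type*} [MeasurableSpace X] [NormedAddCommGroup F] [NormedSpace ℝ F]
  {ν : Measure X} [IsFiniteMeasure ν]

theorem lintegral_enorm_average_le (f : X → F) :
    ∫⁻ _, ‖⨍ y, f y ∂ν‖ₑ ∂ν ≤ ∫⁻ x, ‖f x‖ₑ ∂ν := by
  calc ∫⁻ _, ‖⨍ y, f y ∂ν‖ₑ ∂ν = ‖∫ y, f y ∂ν‖ₑ := by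
        rw [lintegral_const, ← measure_smul_average ν f, enorm_smul, mul_comm,
          Real.enorm_of_nonneg measureReal_nonneg, ofReal_measureReal]
    _ ≤ ∫⁻ x, ‖f x‖ₑ ∂ν := enorm_integral_le_lintegral_enorm f

theorem lintegral_enorm_sub_average_le {f g : X → F} (hf : Integrable f ν) (hg : Integrable g ν) :
    ∫⁻ x, ‖f x - ⨍ y, f y ∂ν‖ₑ ∂ν ≤
      ∫⁻ x, ‖g x - ⨍ y, g y ∂ν‖ₑ ∂ν + 2 * ∫⁻ x, ‖g x - f x‖ₑ ∂ν := by
  have h_average : ⨍ y, (g y - f y) ∂ν = ⨍ y, g y ∂ν - ⨍ y, f y ∂ν := by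
    simp only [average_eq, integral_sub hg hf, smul_sub]
  have h_decomp (x : X) : f x - ⨍ y, f y ∂ν =
      (g x - ⨍ y, g y ∂ν) - (g x - f x) + ⨍ y, (g y - f y) ∂ν := by
    rw [h_average]
    abel
  have h_meas : AEMeasurable (fun x => ‖g x - f x‖ₑ) ν := (hg.sub hf).1.enorm
  calc ∫⁻ x, ‖f x - ⨍ y, f y ∂ν‖ₑ ∂ν
      ≤ ∫⁻ x, (‖g x - ⨍ y, g y ∂ν‖ₑ + ‖g x - f x‖ₑ + ‖⨍ y, (g y - f y) ∂ν‖ₑ) ∂ν := by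
        refine lintegral_mono fun x => ?_
        rw [h_decomp]
        exact (enorm_add_le _ _).trans (add_le_add_left enorm_sub_le _)
    _ = ∫⁻ x, ‖g x - ⨍ y, g y ∂ν‖ₑ ∂ν + ∫⁻ x, ‖g x - f x‖ₑ ∂ν +
          ∫⁻ _, ‖⨍ y, (g y - f y) ∂ν‖ₑ ∂ν := by
        rw [lintegral_add_right _ measurable_const, lintegral_add_right' _ h_meas]
    _ ≤ _ := by
        rw [two_mul, ← add_assoc]
        exact add_le_add_right (lintegral_enorm_average_le _) _

end Average

theorem IsLogConcave.setLIntegral_enorm_sub_setAverage_le_add {E : Type*} [NormedAddCommGroup E]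
    [NormedSpace ℝ E] [ProperSpace E] [MeasurableSpace E] [BorelSpace E] {μ : Measure E}
    [IsFiniteMeasureOnCompacts μ] (hμ : IsLogConcave μ) {Ω : Set E} (hΩ : MeasurableSet Ω)
    (hΩ_bdd : Bornology.IsBounded Ω) (hΩ_conv : Convex ℝ Ω) {f g : E → ℝ}
    (hf : IntegrableOn f Ω μ) (hg : ContDiff ℝ 1 g) :
    ∫⁻ x in Ω, ‖f x - ⨍ y in Ω, f y ∂μ‖ₑ ∂μ ≤
      ENNReal.ofReal (3 / 2 * Metric.diam Ω) * ∫⁻ x in Ω, ‖fderiv ℝ g x‖ₑ ∂μ +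
        2 * ∫⁻ x in Ω, ‖g x - f x‖ₑ ∂μ := by
  have hμΩ : μ Ω < ⊤ := hΩ_bdd.measure_lt_top
  have : IsFiniteMeasure (μ.restrict Ω) := isFiniteMeasure_restrict.2 hμΩ.ne
  have hg_int : IntegrableOn g Ω μ := (hg.continuous.locallyIntegrable.integrableOn_isCompact
    hΩ_bdd.isCompact_closure).mono_set subset_closure
  refine (lintegral_enorm_sub_average_le hf hg_int).trans ?_
  gcongr
  exact hμ.setLIntegral_enorm_sub_setAverage_le hΩ hΩ_bdd hΩ_conv hμΩ.ne hg

section Partition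

variable {E ι : Type*} [NormedAddCommGroup E] [NormedSpace ℝ E] [FiniteDimensional ℝ E]
  [MeasurableSpace E] [BorelSpace E] {μ : Measure E} [μ.IsAddHaarMeasure] [Countable ι]
  {C : ι → Set E}

theorem HasWeakFDeriv.lintegral_enorm_sub_setAverage_le {f : E → ℝ} {f' : E → E →L[ℝ] ℝ}
    (h : HasWeakFDeriv f f' μ) (hf : Integrable f μ) (hf' : Integrable f' μ)
    (hCm : ∀ i, MeasurableSet (C i)) (hCb : ∀ i, Bornology.IsBounded (C i))
    (hCc : ∀ i, Convex ℝ (C i)) (hCd : Pairwise (Function.onFun Disjoint C))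
    (hCu : (⋃ i, C i) = Set.univ) {D : ℝ} (hdiam : ∀ i, Metric.diam (C i) ≤ D)
    {πf : E → ℝ} (hπ : ∀ i, ∀ x ∈ C i, πf x = ⨍ y in C i, f y ∂μ) :
    ∫⁻ x, ‖f x - πf x‖ₑ ∂μ ≤ ENNReal.ofReal (3 / 2 * D) * ∫⁻ x, ‖f' x‖ₑ ∂μ := by
  have h_sum (u : E → ℝ≥0∞) : ∫⁻ x, u x ∂μ = ∑' i, ∫⁻ x in C i, u x ∂μ := by
    rw [← setLIntegral_univ, ← hCu, lintegral_iUnion hCm hCd]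
  refine ENNReal.le_of_forall_pos_le_add fun ε hε _ => ?_
  obtain ⟨g, hg, hgf, hgf'⟩ := h.exists_contDiff_lintegral_enorm_sub_le hf hf'
    (ε := ε / 2) (by simpa using hε.ne')
  have h_cell (i : ι) : ∫⁻ x in C i, ‖f x - πf x‖ₑ ∂μ ≤
      ENNReal.ofReal (3 / 2 * D) * ∫⁻ x in C i, ‖fderiv ℝ g x‖ₑ ∂μ +
        2 * ∫⁻ x in C i, ‖g x - f x‖ₑ ∂μ := by
    calc ∫⁻ x in C i, ‖f x - πf x‖ₑ ∂μ = ∫⁻ x in C i, ‖f x - ⨍ y in C i, f y ∂μ‖ₑ ∂μ :=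
          setLIntegral_congr_fun (hCm i) fun x hx => by simp only [hπ i x hx]
      _ ≤ _ := (isLogConcave_of_isAddHaarMeasure μ).setLIntegral_enorm_sub_setAverage_le_add
        (hCm i) (hCb i) (hCc i) hf.integrableOn hg
      _ ≤ _ := by
          gcongr
          exact hdiam i
  calc ∫⁻ x, ‖f x - πf x‖ₑ ∂μ = ∑' i, ∫⁻ x in C i, ‖f x - πf x‖ₑ ∂μ := h_sum _
    _ ≤ ∑' i, (ENNReal.ofReal (3 / 2 * D) * ∫⁻ x in C i, ‖fderiv ℝ g x‖ₑ ∂μ +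
          2 * ∫⁻ x in C i, ‖g x - f x‖ₑ ∂μ) := ENNReal.tsum_le_tsum h_cell
    _ = ENNReal.ofReal (3 / 2 * D) * ∫⁻ x, ‖fderiv ℝ g x‖ₑ ∂μ +
          2 * ∫⁻ x, ‖g x - f x‖ₑ ∂μ := by
        rw [ENNReal.tsum_add, ENNReal.tsum_mul_left, ENNReal.tsum_mul_left, ← h_sum, ← h_sum]
    _ ≤ ENNReal.ofReal (3 / 2 * D) * ∫⁻ x, ‖f' x‖ₑ ∂μ + 2 * (ε / 2) := by gcongr
    _ = ENNReal.ofReal (3 / 2 * D) * ∫⁻ x, ‖f' x‖ₑ ∂μ + ε := by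
        rw [ENNReal.mul_div_cancel two_ne_zero ENNReal.ofNat_ne_top]

theorem stmt10_general (hCm : ∀ i, MeasurableSet (C i)) (hCb : ∀ i, Bornology.IsBounded (C i))
    (hCc : ∀ i, Convex ℝ (C i)) (hCd : Pairwise (Function.onFun Disjoint C))
    (hCu : (⋃ i, C i) = Set.univ) {D : ℝ} (hdiam : ∀ i, Metric.diam (C i) ≤ D)
    {f : E → ℝ} {f' : E → E →L[ℝ] ℝ} (h : HasWeakFDeriv f f' μ) (hf : Integrable f μ)
    (hf' : Integrable f' μ) {πf : E → ℝ} (hπ : ∀ i, ∀ x ∈ C i, πf x = ⨍ y in C i, f y ∂μ) :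
    ∫ x, |f x - πf x| ∂μ ≤ 3 / 2 * D * ∫ x, ‖f' x‖ ∂μ := by
  have hD : 0 ≤ D := by
    obtain ⟨i, -⟩ := Set.mem_iUnion.1 (hCu ▸ Set.mem_univ (0 : E))
    exact Metric.diam_nonneg.trans (hdiam i)
  refine (ENNReal.ofReal_le_ofReal_iff (by positivity)).1 ?_
  calc ENNReal.ofReal (∫ x, |f x - πf x| ∂μ) = ‖∫ x, |f x - πf x| ∂μ‖ₑ :=
        (Real.enorm_of_nonneg (integral_nonneg fun _ => abs_nonneg _)).symm
    _ ≤ ∫⁻ x, ‖f x - πf x‖ₑ ∂μ := by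
        simpa only [enorm_norm] using!
          enorm_integral_le_lintegral_enorm (μ := μ) fun x => ‖f x - πf x‖
    _ ≤ ENNReal.ofReal (3 / 2 * D) * ∫⁻ x, ‖f' x‖ₑ ∂μ :=
        h.lintegral_enorm_sub_setAverage_le hf hf' hCm hCb hCc hCd hCu hdiam hπ
    _ = ENNReal.ofReal (3 / 2 * D * ∫ x, ‖f' x‖ ∂μ) := by
        rw [← ofReal_integral_norm_eq_lintegral_enorm hf', ← ENNReal.ofReal_mul (by positivity)]

end Partition

/-- Global `L¹` Poincaré inequality for cell averaging over a countable partition of `ℝⁿ`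
into bounded convex measurable cells of diameter at most `D`: for `f ∈ W^{1,1}(ℝⁿ)`
(here: differentiable with `f` and `‖∇f‖` integrable), if `πf` equals the mean of `f` on
each cell, then `‖f − πf‖₁ ≤ (π/2) · D · ‖∇f‖₁`. -/
theorem stmt10 {n : ℕ} {ι : Type*} [Countable ι]
    (C : ι → Set (EuclideanSpace ℝ (Fin n)))
    (hCm : ∀ i, MeasurableSet (C i))
    (hCb : ∀ i, Bornology.IsBounded (C i))
    (hCc : ∀ i, Convex ℝ (C i))
    (hCd : Pairwise (Function.onFun Disjoint C))
    (hCu : (⋃ i, C i) = Set.univ)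
    (hC0 : ∀ i, 0 < volume (C i)) (hCt : ∀ i, volume (C i) < ⊤)
    (D : ℝ) (hdiam : ∀ i, Metric.diam (C i) ≤ D)
    (f : EuclideanSpace ℝ (Fin n) → ℝ)
    (hfd : Differentiable ℝ f)
    (hfi : Integrable f)
    (hgi : Integrable (fun x => ‖fderiv ℝ f x‖))
    (πf : EuclideanSpace ℝ (Fin n) → ℝ)
    (hπ : ∀ i, ∀ x ∈ C i, πf x = (volume (C i)).toReal⁻¹ * ∫ y in C i, f y) :
    ∫ x, |f x - πf x| ≤ (Real.pi / 2) * D * ∫ x, ‖fderiv ℝ f x‖ := by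
  obtain ⟨i, -⟩ := Set.mem_iUnion.1 (hCu ▸ Set.mem_univ (0 : EuclideanSpace ℝ (Fin n)))
  have hD : 0 ≤ D := Metric.diam_nonneg.trans (hdiam i)
  have hfi' : Integrable (fderiv ℝ f) :=
    (integrable_norm_iff (measurable_fderiv ℝ f).aestronglyMeasurable).1 hgi
  have h_average : ∀ i, ∀ x ∈ C i, πf x = ⨍ y in C i, f y := fun i x hx => by
    rw [hπ i x hx, setAverage_eq, smul_eq_mul, measureReal_def]
  refine (stmt10_general hCm hCb hCc hCd hCu hdiam
    (hasWeakFDeriv_fderiv hfd hfi'.locallyIntegrable) hfi hfi' h_average).trans ?_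
  gcongr
  exact Real.pi_gt_three.le
end

section
/- Let ρ : ℝ³ → [0,∞) with ∫ρ = N, √ρ ∈ H¹(ℝ³), and suppose F[ρ] ≥ c |√ρ|²_{H¹} = c ∫|∇√ρ|² for some c > 0. Let π_n be cell-averaging over a partition into convex cells of diameter ≤ D_n. Then ‖ρ − π_n ρ‖₁ ≤ (π/2) D_n · 2√N · (F[ρ]/c)^{1/2}; i.e. ‖ρ − π_n ρ‖₁ ≤ C D_n F[ρ]^{1/2} with C depending only on N and c. -/
open Filter Topology MeasureTheory

/-
On a convex cell `C` the mean oscillation of `f` is at most the average of `|f x - f y|` over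
pairs. Split each segment `[x, y]` at its midpoint; by symmetry it suffices to integrate the
derivative over the half next to `x`, i.e. over `z = y + s (x - y)` with `1/2 < s < 1`. Exchanging
`x` for `z` by a homothety centred at `y` gives, for fixed `z` with derivative `L`, a kernel in `y`
which vanishes unless the segment from `y` through `z` can be prolonged to `x` inside `C`. If
`L z < L y`, prolonging it cannot take `L` below `L p`, where `p` minimizes `L` on the closure of
`C`; so the kernel is at most `(2 ^ n - 1) / n * min (L y - L z) (L z - L p)`. The cell is
star-shaped about `p`, and polar coordinates centred there reduce the average over `y` of this
minimum to a one-dimensional mean over a ray, at most `‖L‖ diam C / 3` when `n = 3`. The case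
`L z > L y` is the same with `-L`. The resulting Poincaré constant `2 * 7/3 * 1/3 = 14/9` is below
`π / 2`. It remains to sum over the cells and to apply Cauchy–Schwarz to `∇ρ = 2 √ρ G`.
-/

open Set Metric Module
open scoped ENNReal

/-- `RadialMeanBound n c` bounds by `c R` the mean of `r ↦ min (r - a) a` on `[a, R]` with respect
to the radial weight `r ^ (n - 1) dr` of polar coordinates in dimension `n`, denominators cleared.
The Poincaré constant below is expressed through such a `c`. -/
def RadialMeanBound (n : ℕ) (c : ℝ) : Prop :=
  ∀ ⦃a R : ℝ⦄, 0 ≤ a → a ≤ R →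
    ∫ r in a..R, min (r - a) a * r ^ (n - 1) ≤ c * R * ∫ r in a..R, r ^ (n - 1)

lemma RadialMeanBound.nonneg {n : ℕ} {c : ℝ} (hc : RadialMeanBound n c) : 0 ≤ c := by
  have hint : ∫ r in (0 : ℝ)..1, min (r - 0) 0 * r ^ (n - 1) = 0 := by
    refine intervalIntegral.integral_zero_ae (ae_of_all _ fun r hr => ?_)
    rw [uIoc_of_le zero_le_one] at hr
    rw [sub_zero, min_eq_right hr.1.le, zero_mul]
  have h := hc le_rfl zero_le_one
  rw [hint, integral_pow, mul_one, one_pow, zero_pow (Nat.succ_ne_zero _), sub_zero] at h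
  exact nonneg_of_mul_nonneg_left h (by positivity)

lemma radialMeanBound_one_half (n : ℕ) : RadialMeanBound n (1 / 2) := by
  intro a R ha haR
  rw [← intervalIntegral.integral_const_mul]
  refine intervalIntegral.integral_mono_on haR (Continuous.intervalIntegrable (by fun_prop) _ _)
    (Continuous.intervalIntegrable (by fun_prop) _ _) fun r hr => ?_
  have hr0 : 0 ≤ r := ha.trans hr.1
  have hmin : min (r - a) a ≤ 1 / 2 * R := by
    linarith [min_le_left (r - a) a, min_le_right (r - a) a, hr.2]
  gcongr

lemma integral_sub_mul_sq (a b : ℝ) :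
    ∫ r in a..b, (r - a) * r ^ 2 = b ^ 4 / 4 - a * b ^ 3 / 3 + a ^ 4 / 12 := by
  have hexp : ∀ r : ℝ, (r - a) * r ^ 2 = r ^ 3 - a * r ^ 2 := fun r => by ring
  simp_rw [hexp]
  rw [intervalIntegral.integral_sub (Continuous.intervalIntegrable (by fun_prop) _ _)
    (Continuous.intervalIntegrable (by fun_prop) _ _), intervalIntegral.integral_const_mul,
    integral_pow, integral_pow]
  push_cast
  ring

lemma integral_min_sub_mul_sq_of_le_two_mul {a b : ℝ} (hab : a ≤ b) (hb : b ≤ 2 * a) :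
    ∫ r in a..b, min (r - a) a * r ^ 2 = b ^ 4 / 4 - a * b ^ 3 / 3 + a ^ 4 / 12 := by
  rw [← integral_sub_mul_sq]
  refine intervalIntegral.integral_congr fun r hr => ?_
  rw [uIcc_of_le hab] at hr
  simp only [min_eq_left (show r - a ≤ a by linarith [hr.2])]

lemma integral_min_sub_mul_sq_of_two_mul_le {a R : ℝ} (ha : 0 ≤ a) (hR : 2 * a ≤ R) :
    ∫ r in a..R, min (r - a) a * r ^ 2 = a * R ^ 3 / 3 - 5 / 4 * a ^ 4 := by
  have hint : ∀ b d, IntervalIntegrable (fun r => min (r - a) a * r ^ 2) volume b d :=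
    fun b d => Continuous.intervalIntegrable (by fun_prop) _ _
  have hright : ∫ r in (2 * a)..R, min (r - a) a * r ^ 2 = ∫ r in (2 * a)..R, a * r ^ 2 := by
    refine intervalIntegral.integral_congr fun r hr => ?_
    rw [uIcc_of_le hR] at hr
    simp only [min_eq_right (show a ≤ r - a by linarith [hr.1])]
  rw [← intervalIntegral.integral_add_adjacent_intervals (hint a (2 * a)) (hint (2 * a) R),
    integral_min_sub_mul_sq_of_le_two_mul (by linarith) le_rfl, hright,
    intervalIntegral.integral_const_mul, integral_pow]
  push_cast
  ring

lemma radialMeanBound_three : RadialMeanBound 3 (1 / 3) := by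
  intro a R ha haR
  simp only [Nat.add_one_sub_one, integral_pow]
  norm_num only
  rcases le_total R (2 * a) with hR | hR
  · rw [integral_min_sub_mul_sq_of_le_two_mul haR hR]
    have hquad : 0 ≤ 7 * a * R ^ 2 + 7 * a ^ 2 * R + 3 * a ^ 3 - 5 * R ^ 3 := by
      have hR0 : 0 ≤ R := ha.trans haR
      nlinarith [mul_nonneg (sq_nonneg R) (sub_nonneg.2 hR), pow_nonneg ha 3,
        mul_nonneg (mul_nonneg ha hR0) (sub_nonneg.2 hR)]
    linear_combination (1 / 36) * mul_nonneg (sub_nonneg.2 haR) hquad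
  · rw [integral_min_sub_mul_sq_of_two_mul_le ha hR]
    have hsos : 0 ≤ (2 * R ^ 2 - 3 * a * R - 4 * a ^ 2) ^ 2 + 7 * (a * (R - 2 * a)) ^ 2
        + (a ^ 2) ^ 2 := by positivity
    linear_combination (1 / 36) * hsos

lemma lintegral_Ioc_ofReal_eq_ofReal_integral {g : ℝ → ℝ} {a b : ℝ} (hab : a ≤ b)
    (hg : IntervalIntegrable g volume a b) (hg0 : ∀ r ∈ Ioc a b, 0 ≤ g r) :
    ∫⁻ r in Ioc a b, ENNReal.ofReal (g r) = ENNReal.ofReal (∫ r in a..b, g r) := by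
  rw [intervalIntegral.integral_of_le hab, ofReal_integral_eq_lintegral_ofReal
    ((intervalIntegrable_iff_integrableOn_Ioc_of_le hab).1 hg)
    ((ae_restrict_mem measurableSet_Ioc).mono hg0)]

lemma RadialMeanBound.lintegral_Ioc_le {n : ℕ} {c : ℝ} (hc : RadialMeanBound n c) {a R κ : ℝ}
    (ha : 0 ≤ a) (hκ : 0 ≤ κ) :
    ∫⁻ r in Ioc a R, ENNReal.ofReal (r ^ (n - 1)) * ENNReal.ofReal (min (κ * r - κ * a) (κ * a)) ≤
      ENNReal.ofReal (c * (κ * R)) * ∫⁻ r in Ioc a R, ENNReal.ofReal (r ^ (n - 1)) := by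
  rcases lt_or_ge R a with haR | haR
  · simp only [Ioc_eq_empty_of_le haR.le, Measure.restrict_empty, lintegral_zero_measure, mul_zero,
      le_refl]
  have hpow : ∀ r ∈ Ioc a R, 0 ≤ r ^ (n - 1) := fun r hr => pow_nonneg (ha.trans hr.1.le) _
  calc _ = ∫⁻ r in Ioc a R, ENNReal.ofReal (κ * (min (r - a) a * r ^ (n - 1))) := by
        refine setLIntegral_congr_fun measurableSet_Ioc fun r hr => ?_
        rw [← ENNReal.ofReal_mul (hpow r hr), ← mul_sub, ← mul_min_of_nonneg _ _ hκ]
        congr 1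
        ring
    _ = ENNReal.ofReal (κ * ∫ r in a..R, min (r - a) a * r ^ (n - 1)) := by
        rw [lintegral_Ioc_ofReal_eq_ofReal_integral haR
          (Continuous.intervalIntegrable (by fun_prop) _ _)
          fun r hr => mul_nonneg hκ (mul_nonneg (le_min (sub_nonneg.2 hr.1.le) ha) (hpow r hr)),
          intervalIntegral.integral_const_mul]
    _ ≤ ENNReal.ofReal (c * (κ * R) * ∫ r in a..R, r ^ (n - 1)) := by
        rw [mul_left_comm c, mul_assoc κ]
        exact ENNReal.ofReal_le_ofReal (mul_le_mul_of_nonneg_left (hc ha haR) hκ)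
    _ = _ := by
        rw [ENNReal.ofReal_mul (mul_nonneg hc.nonneg (mul_nonneg hκ (ha.trans haR))),
          lintegral_Ioc_ofReal_eq_ofReal_integral haR
            (Continuous.intervalIntegrable (by fun_prop) _ _) hpow]

lemma ae_eq_Ioc_sSup {T : Set ℝ} (hT0 : T ⊆ Ioi 0) (hTb : BddAbove T)
    (hT : ∀ r ∈ T, Ioo 0 r ⊆ T) : T =ᵐ[volume] Ioc 0 (sSup T) := by
  have hsub : T ⊆ Ioc 0 (sSup T) := fun r hr => ⟨hT0 hr, le_csSup hTb hr⟩
  have hsup : Ioo 0 (sSup T) ⊆ T := by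
    rintro s ⟨hs0, hs⟩
    rcases T.eq_empty_or_nonempty with rfl | hne
    · exact absurd (hs0.trans hs) (by simp)
    · obtain ⟨r, hr, hsr⟩ := exists_lt_of_lt_csSup hne hs
      exact hT r hr ⟨hs0, hsr⟩
  exact hsub.eventuallyLE.antisymm (Ioo_ae_eq_Ioc.symm.le.trans hsup.eventuallyLE)

lemma RadialMeanBound.lintegral_ray_le {n : ℕ} {c : ℝ} (hc : RadialMeanBound n c) {T : Set ℝ}
    (hT0 : T ⊆ Ioi 0) (hT : ∀ r ∈ T, Ioo 0 r ⊆ T) {κ a D : ℝ} (ha : 0 ≤ a)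
    (hD : ∀ r ∈ T, κ * r ≤ D) :
    ∫⁻ r in T ∩ {r | a < κ * r},
        ENNReal.ofReal (r ^ (n - 1)) * ENNReal.ofReal (min (κ * r - a) a) ≤
      ENNReal.ofReal (c * D) * ∫⁻ r in T ∩ {r | a < κ * r}, ENNReal.ofReal (r ^ (n - 1)) := by
  rcases (T ∩ {r | a < κ * r}).eq_empty_or_nonempty with hempty | ⟨r₀, hr₀, har₀⟩
  · simp only [hempty, Measure.restrict_empty, lintegral_zero_measure, mul_zero, le_refl]
  have hκ : 0 < κ := pos_of_mul_pos_left (ha.trans_lt har₀) (le_of_lt (hT0 hr₀))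
  obtain ⟨α, rfl⟩ : ∃ α, a = κ * α := ⟨a / κ, by field_simp⟩
  have hα : 0 ≤ α := nonneg_of_mul_nonneg_right ha hκ
  have hle : ∀ r ∈ T, r ≤ D / κ := fun r hr => (le_div_iff₀' hκ).2 (hD r hr)
  have hsup : κ * sSup T ≤ D := (le_div_iff₀' hκ).1 (csSup_le ⟨r₀, hr₀⟩ hle)
  have hae : (T ∩ {r | κ * α < κ * r} : Set ℝ) =ᵐ[volume] Ioc α (sSup T) := by
    have habove : {r | κ * α < κ * r} = Ioi α := by
      simp only [mul_lt_mul_iff_right₀ hκ]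
      rfl
    rw [habove]
    refine ((ae_eq_Ioc_sSup hT0 ⟨_, hle⟩ hT).inter EventuallyEq.rfl).trans (.of_eq ?_)
    rw [Ioc_inter_Ioi, sup_eq_right.2 hα]
  rw [Measure.restrict_congr_set hae]
  refine (hc.lintegral_Ioc_le hα hκ.le).trans ?_
  gcongr
  exact hc.nonneg

section Polar

variable {E : Type*} [NormedAddCommGroup E] [NormedSpace ℝ E] [FiniteDimensional ℝ E]
  [Nontrivial E] [MeasurableSpace E] [BorelSpace E] (μ : Measure E) [μ.IsAddHaarMeasure]

lemma lintegral_eq_lintegral_sphere {f : E → ℝ≥0∞} (hf : Measurable f) (p : E) :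
    ∫⁻ x, f x ∂μ = ∫⁻ θ : sphere (0 : E) 1, (∫⁻ r in Ioi (0 : ℝ),
      ENNReal.ofReal (r ^ (finrank ℝ E - 1)) * f (p + r • (θ : E))) ∂μ.toSphere := by
  have hmp := (μ.measurePreserving_homeomorphUnitSphereProd).symm
    (homeomorphUnitSphereProd E).toMeasurableEquiv
  have hg : Measurable fun q : sphere (0 : E) 1 × Ioi (0 : ℝ) =>
      f (p + (q.2 : ℝ) • (q.1 : E)) := by fun_prop
  calc ∫⁻ x, f x ∂μ = ∫⁻ x in ({0}ᶜ : Set E), f (p + x) ∂μ := by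
        rw [restrict_compl_singleton, lintegral_add_left_eq_self]
    _ = ∫⁻ x : ({0}ᶜ : Set E), f (p + x) ∂(μ.comap (↑)) :=
        (lintegral_subtype_comap (measurableSet_singleton _).compl fun x => f (p + x)).symm
    _ = ∫⁻ q, f (p + (q.2 : ℝ) • (q.1 : E))
          ∂(μ.toSphere.prod (Measure.volumeIoiPow (finrank ℝ E - 1))) := by
        rw [← hmp.lintegral_comp_emb (MeasurableEquiv.measurableEmbedding _)]
        rfl
    _ = _ := by
        rw [lintegral_prod _ hg.aemeasurable]
        refine lintegral_congr fun θ => ?_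
        rw [Measure.volumeIoiPow, lintegral_withDensity_eq_lintegral_mul _ (by fun_prop)
          (by fun_prop)]
        exact lintegral_subtype_comap measurableSet_Ioi
          fun r : ℝ => ENNReal.ofReal (r ^ (finrank ℝ E - 1)) * f (p + r • (θ : E))

lemma setLIntegral_eq_lintegral_sphere {S : Set E} (hS : MeasurableSet S) {f : E → ℝ≥0∞}
    (hf : Measurable f) (p : E) :
    ∫⁻ x in S, f x ∂μ = ∫⁻ θ : sphere (0 : E) 1, (∫⁻ r in {r : ℝ | 0 < r ∧ p + r • (θ : E) ∈ S},
      ENNReal.ofReal (r ^ (finrank ℝ E - 1)) * f (p + r • (θ : E))) ∂μ.toSphere := by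
  rw [← lintegral_indicator hS, lintegral_eq_lintegral_sphere μ (hf.indicator hS) p]
  refine lintegral_congr fun θ => ?_
  have hray : MeasurableSet ((fun r : ℝ => p + r • (θ : E)) ⁻¹' S) := hS.preimage (by fun_prop)
  rw [show {r : ℝ | 0 < r ∧ p + r • (θ : E) ∈ S} =
    ((fun r : ℝ => p + r • (θ : E)) ⁻¹' S) ∩ Ioi 0 from inter_comm _ _,
    ← setLIntegral_indicator hray]
  refine lintegral_congr fun r => ?_
  classical
  simp only [indicator_apply, mem_preimage, mul_ite, mul_zero]

variable {μ}

lemma lintegral_min_le_of_starConvex {c : ℝ} (hc : RadialMeanBound (finrank ℝ E) c) {S : Set E}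
    (hSm : MeasurableSet S) {p : E} (hS : StarConvex ℝ p S) (L : StrongDual ℝ E) {m D : ℝ}
    (hm : L p ≤ m) (hD : ∀ y ∈ S, L y - L p ≤ D) :
    ∫⁻ y in S ∩ {y | m < L y}, ENNReal.ofReal (min (L y - m) (m - L p)) ∂μ ≤
      ENNReal.ofReal (c * D) * μ (S ∩ {y | m < L y}) := by
  have hA : MeasurableSet (S ∩ {y | m < L y}) :=
    hSm.inter (measurableSet_lt (by fun_prop) (by fun_prop))
  rw [← setLIntegral_one (S ∩ {y | m < L y}), setLIntegral_eq_lintegral_sphere μ hA (by fun_prop) p,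
    setLIntegral_eq_lintegral_sphere μ hA measurable_const p,
    ← lintegral_const_mul' _ _ ENNReal.ofReal_ne_top]
  refine lintegral_mono fun θ => ?_
  have hL : ∀ r : ℝ, L (p + r • (θ : E)) = L p + L θ * r := fun r => by
    rw [map_add, map_smul, smul_eq_mul, mul_comm]
  set T : Set ℝ := {r | 0 < r ∧ p + r • (θ : E) ∈ S}
  have hT : ∀ r ∈ T, Ioo 0 r ⊆ T := by
    rintro r ⟨hr0, hr⟩ s ⟨hs0, hsr⟩
    refine ⟨hs0, ?_⟩
    have hmem := hS.add_smul_mem hr (t := s / r) (by positivity) ((div_le_one hr0).2 hsr.le)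
    rwa [smul_smul, div_mul_cancel₀ _ hr0.ne'] at hmem
  have hTD : ∀ r ∈ T, L θ * r ≤ D := fun r hr => by
    simpa only [hL, add_sub_cancel_left] using hD _ hr.2
  have hray : {r : ℝ | 0 < r ∧ p + r • (θ : E) ∈ S ∩ {y | m < L y}} =
      T ∩ {r | m - L p < L θ * r} := by
    ext r
    simp only [T, mem_inter_iff, mem_ofPred_eq, hL, sub_lt_iff_lt_add', and_assoc]
  simpa only [hray, hL, mul_one, add_sub_right_comm, sub_sub_eq_add_sub, ← sub_sub, add_comm]
    using hc.lintegral_ray_le (fun r hr => hr.1) hT (sub_nonneg.2 hm) hTD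

end Polar

lemma two_pow_sub_one_div_nonneg (n : ℕ) : (0 : ℝ) ≤ (2 ^ n - 1) / n :=
  div_nonneg (sub_nonneg.2 (one_le_pow₀ one_le_two)) n.cast_nonneg

lemma pow_sub_one_le_of_le_two {q : ℝ} (hq1 : 1 ≤ q) (hq2 : q ≤ 2) (n : ℕ) :
    q ^ n - 1 ≤ (2 ^ n - 1) * (q - 1) := by
  have : 0 ≤ q := zero_le_one.trans hq1
  calc q ^ n - 1 = (∑ i ∈ Finset.range n, q ^ i) * (q - 1) := (geom_sum_mul q n).symm
    _ ≤ (∑ i ∈ Finset.range n, 2 ^ i) * (q - 1) := by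
        gcongr
    _ = (2 ^ n - 1) * (q - 1) := by
        rw [← geom_sum_mul (2 : ℝ) n]
        norm_num

lemma integral_inv_pow_succ {n : ℕ} (hn : n ≠ 0) {b : ℝ} (hb : 0 < b) :
    ∫ s in b..1, (s ^ (n + 1))⁻¹ = (b⁻¹ ^ n - 1) / n := by
  have hzpow : ∀ s : ℝ, (s ^ (n + 1))⁻¹ = s ^ (-(n + 1 : ℤ)) := fun s => by
    rw [zpow_neg]
    norm_cast
  have h0 : (0 : ℝ) ∉ uIcc b 1 := notMem_uIcc_of_lt hb zero_lt_one
  simp_rw [hzpow]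
  rw [integral_zpow (Or.inr ⟨by omega, h0⟩), one_zpow,
    show -(n + 1 : ℤ) + 1 = -(n : ℤ) by ring, zpow_neg, zpow_natCast, inv_pow]
  push_cast
  rw [show -((n : ℝ) + 1) + 1 = -n by ring, div_neg, ← neg_div, neg_sub]

lemma lintegral_inv_pow_mul_le {n : ℕ} (hn : n ≠ 0) {u a : ℝ} (hu : 0 < u) (ha : 0 ≤ a) :
    ∫⁻ s in Ioo (1 / 2) 1 ∩ {s | u ≤ s * (u + a)}, ENNReal.ofReal ((s ^ (n + 1))⁻¹ * u) ≤
      ENNReal.ofReal ((2 ^ n - 1) / n * min u a) := by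
  set b : ℝ := max (1 / 2) (u / (u + a))
  have hb2 : 1 / 2 ≤ b := le_max_left _ _
  have hb0 : 0 < b := one_half_pos.trans_le hb2
  have hb1 : b ≤ 1 := max_le (by norm_num) ((div_le_one (by positivity)).2 (by linarith))
  have hsub : Ioo (1 / 2) 1 ∩ {s | u ≤ s * (u + a)} ⊆ Icc b 1 := fun s hs =>
    ⟨max_le hs.1.1.le ((div_le_iff₀ (by positivity)).2 hs.2), hs.1.2.le⟩
  have hcont : ContinuousOn (fun s : ℝ => (s ^ (n + 1))⁻¹ * u) (uIcc b 1) :=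
    ((continuousOn_pow _).inv₀ fun s hs => pow_ne_zero _ <| by
      rw [uIcc_of_le hb1] at hs
      exact (hb0.trans_le hs.1).ne').mul continuousOn_const
  have hq1 : 1 ≤ b⁻¹ := (one_le_inv₀ hb0).2 hb1
  have hq2 : b⁻¹ ≤ 2 := (inv_le_comm₀ hb0 two_pos).2 (by linarith)
  have hqa : b⁻¹ ≤ (u + a) / u := by
    rw [← inv_div]
    exact inv_anti₀ (by positivity) (le_max_right _ _)
  have hmin : (b⁻¹ - 1) * u ≤ min u a := by
    rw [add_div, div_self hu.ne'] at hqa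
    exact le_min (by nlinarith) ((le_div_iff₀ hu).1 (by linarith))
  calc _ ≤ ∫⁻ s in Icc b 1, ENNReal.ofReal ((s ^ (n + 1))⁻¹ * u) := lintegral_mono_set hsub
    _ = ENNReal.ofReal ((b⁻¹ ^ n - 1) / n * u) := by
        rw [Measure.restrict_congr_set Ioc_ae_eq_Icc.symm,
          lintegral_Ioc_ofReal_eq_ofReal_integral hb1
          hcont.intervalIntegrable fun s hs => mul_nonneg
            (inv_nonneg.2 (pow_nonneg (hb0.le.trans hs.1.le) _)) hu.le,
          intervalIntegral.integral_mul_const, integral_inv_pow_succ hn hb0]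
    _ ≤ ENNReal.ofReal ((2 ^ n - 1) * (b⁻¹ - 1) / n * u) := by
        gcongr
        exact pow_sub_one_le_of_le_two hq1 hq2 n
    _ = ENNReal.ofReal ((2 ^ n - 1) / n * ((b⁻¹ - 1) * u)) := by ring_nf
    _ ≤ _ := by
        gcongr
        exact two_pow_sub_one_div_nonneg n

section SegmentKernel

variable {E : Type*} [NormedAddCommGroup E] [NormedSpace ℝ E]

/-- The density obtained from `|L (x - y)| ds dx`, `x ∈ K`, by substituting `z = y + s • (x - y)`
for `x`: one factor `s⁻¹` comes from `x - y = s⁻¹ • (z - y)`, the others from the Jacobian. -/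
noncomputable def segmentDensity (K : Set E) (L : StrongDual ℝ E) (z y : E) : ℝ → ℝ≥0∞ :=
  {s : ℝ | y + s⁻¹ • (z - y) ∈ K}.indicator
    fun s => ENNReal.ofReal ((s ^ (finrank ℝ E + 1))⁻¹ * |L (y - z)|)

/-- The kernel collecting, for fixed `y` and `z`, the segments with one end at `y`, the other end in
`K` and `z` in the half away from `y`; it turns `L¹` differences of `f` into an `L¹` norm of its
derivative, with `L` standing for the derivative at `z`. -/
noncomputable def segmentKernel (K : Set E) (L : StrongDual ℝ E) (z y : E) : ℝ≥0∞ :=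
  ∫⁻ s in Ioo (1 / 2 : ℝ) 1, segmentDensity K L z y s

lemma segmentKernel_neg (K : Set E) (L : StrongDual ℝ E) (z y : E) :
    segmentKernel K (-L) z y = segmentKernel K L z y := by
  simp only [segmentKernel, segmentDensity, neg_apply, abs_neg]

variable [FiniteDimensional ℝ E] [Nontrivial E] [MeasurableSpace E] [BorelSpace E]
  {μ : Measure E} [μ.IsAddHaarMeasure]

lemma segmentKernel_le {K : Set E} (hK : MeasurableSet K) {L : StrongDual ℝ E} {p z y : E}
    (hp : ∀ x ∈ K, L p ≤ L x) (hz : z ∈ K) (hzy : L z < L y) :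
    segmentKernel K L z y ≤ ENNReal.ofReal ((2 ^ finrank ℝ E - 1) / finrank ℝ E) *
      ENNReal.ofReal (min (L y - L z) (L z - L p)) := by
  have hset : MeasurableSet {s : ℝ | y + s⁻¹ • (z - y) ∈ K} := hK.preimage (by fun_prop)
  have hsub : {s : ℝ | y + s⁻¹ • (z - y) ∈ K} ∩ Ioo (1 / 2) 1 ⊆
      Ioo (1 / 2) 1 ∩ {s | L y - L z ≤ s * (L y - L z + (L z - L p))} := by
    rintro s ⟨hsK, hs⟩
    have hs0 : 0 < s := one_half_pos.trans hs.1
    have hLx := mul_le_mul_of_nonneg_left (hp _ hsK) hs0.le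
    rw [map_add, map_smul, map_sub, smul_eq_mul, mul_add, mul_inv_cancel_left₀ hs0.ne'] at hLx
    exact ⟨hs, show L y - L z ≤ s * (L y - L z + (L z - L p)) by linarith⟩
  simp only [segmentKernel, segmentDensity]
  rw [setLIntegral_indicator hset, map_sub, abs_of_pos (sub_pos.2 hzy),
    ← ENNReal.ofReal_mul (two_pow_sub_one_div_nonneg _)]
  exact (lintegral_mono_set hsub).trans
    (lintegral_inv_pow_mul_le finrank_pos.ne' (sub_pos.2 hzy) (sub_nonneg.2 (hp z hz)))

lemma setLIntegral_segmentKernel_lt_le {c : ℝ} (hc : RadialMeanBound (finrank ℝ E) c) {K : Set E}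
    (hK : Convex ℝ K) (hKc : IsCompact K) (L : StrongDual ℝ E) {z : E} (hz : z ∈ K) :
    ∫⁻ y in K ∩ {y | L z < L y}, segmentKernel K L z y ∂μ ≤
      ENNReal.ofReal ((2 ^ finrank ℝ E - 1) / finrank ℝ E * c * (‖L‖ * diam K)) *
        μ (K ∩ {y | L z < L y}) := by
  obtain ⟨p, hpK, hp⟩ := hKc.exists_isMinOn ⟨z, hz⟩ (f := L) (by fun_prop)
  rw [isMinOn_iff] at hp
  have hdiam : ∀ y ∈ K, L y - L p ≤ ‖L‖ * diam K := fun y hy => by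
    rw [← map_sub]
    refine (le_abs_self _).trans ((L.le_opNorm _).trans ?_)
    gcongr
    rw [← dist_eq_norm]
    exact dist_le_diam_of_mem hKc.isBounded hy hpK
  have hm : MeasurableSet (K ∩ {y | L z < L y}) :=
    hKc.measurableSet.inter (measurableSet_lt (by fun_prop) (by fun_prop))
  calc _ ≤ ∫⁻ y in K ∩ {y | L z < L y}, ENNReal.ofReal ((2 ^ finrank ℝ E - 1) / finrank ℝ E) *
          ENNReal.ofReal (min (L y - L z) (L z - L p)) ∂μ :=
        setLIntegral_mono' hm fun y hy => segmentKernel_le hKc.measurableSet hp hz hy.2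
    _ ≤ ENNReal.ofReal ((2 ^ finrank ℝ E - 1) / finrank ℝ E) *
          (ENNReal.ofReal (c * (‖L‖ * diam K)) * μ (K ∩ {y | L z < L y})) := by
        rw [lintegral_const_mul' _ _ ENNReal.ofReal_ne_top]
        gcongr
        exact lintegral_min_le_of_starConvex hc hKc.measurableSet (hK.starConvex hpK) L (hp z hz)
          hdiam
    _ = _ := by
        rw [← mul_assoc, ← ENNReal.ofReal_mul (two_pow_sub_one_div_nonneg _), mul_assoc (_ / _)]

lemma setLIntegral_segmentKernel_le {c : ℝ} (hc : RadialMeanBound (finrank ℝ E) c) {K : Set E}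
    (hK : Convex ℝ K) (hKc : IsCompact K) (L : StrongDual ℝ E) {z : E} (hz : z ∈ K) :
    ∫⁻ y in K, segmentKernel K L z y ∂μ ≤
      ENNReal.ofReal ((2 ^ finrank ℝ E - 1) / finrank ℝ E * c * (‖L‖ * diam K)) * μ K := by
  have hpos : MeasurableSet {y | L z < L y} := measurableSet_lt (by fun_prop) (by fun_prop)
  have hneg : MeasurableSet {y | L y < L z} := measurableSet_lt (by fun_prop) (by fun_prop)
  have hsupp : Function.support (segmentKernel K L z) ⊆ {y | L z < L y} ∪ {y | L y < L z} := by
    refine fun y hy => lt_or_gt_of_ne fun heq : L z = L y => hy ?_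
    simp only [segmentKernel, segmentDensity, map_sub, heq, sub_self, abs_zero, mul_zero,
      ENNReal.ofReal_zero, indicator_zero, lintegral_zero]
  have hdisj : Disjoint (K ∩ {y | L z < L y}) (K ∩ {y | L y < L z}) :=
    disjoint_left.2 fun y ⟨_, (hy : L z < L y)⟩ hy' => hy.not_gt hy'.2
  have hle := setLIntegral_segmentKernel_lt_le (μ := μ) hc hK hKc (-L) hz
  simp only [segmentKernel_neg, neg_apply, neg_lt_neg_iff, norm_neg] at hle
  calc _ = ∫⁻ y in K ∩ {y | L z < L y} ∪ K ∩ {y | L y < L z}, segmentKernel K L z y ∂μ := by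
        rw [← indicator_eq_self.2 hsupp, setLIntegral_indicator (hpos.union hneg), inter_comm,
          inter_union_distrib_left, indicator_eq_self.2 hsupp]
    _ ≤ _ := (lintegral_union_le _ _ _).trans
        (add_le_add (setLIntegral_segmentKernel_lt_le hc hK hKc L hz) hle)
    _ ≤ _ := by
        rw [← mul_add, ← measure_union hdisj (hKc.measurableSet.inter hneg)]
        gcongr
        exact union_subset inter_subset_left inter_subset_left

end SegmentKernel

lemma enorm_sub_le_lintegral_enorm_deriv {F : Type*} [NormedAddCommGroup F] [NormedSpace ℝ F]
    [CompleteSpace F] {g : ℝ → F} (hg : Differentiable ℝ g) {a b : ℝ} (hab : a ≤ b) :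
    ‖g b - g a‖ₑ ≤ ∫⁻ t in Ioo a b, ‖deriv g t‖ₑ := by
  rcases eq_or_ne (∫⁻ t in Ioo a b, ‖deriv g t‖ₑ) ⊤ with htop | hfin
  · exact htop ▸ le_top
  have hint : IntervalIntegrable (deriv g) volume a b := by
    rw [intervalIntegrable_iff_integrableOn_Ioo_of_le hab]
    exact ⟨aestronglyMeasurable_deriv _ _, hfin.lt_top⟩
  rw [← intervalIntegral.integral_eq_sub_of_hasDerivAt (fun t _ => (hg t).hasDerivAt) hint,
    intervalIntegral.integral_of_le hab, ← restrict_Ioo_eq_restrict_Ioc]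
  exact enorm_integral_le_lintegral_enorm _

section Segment

variable {E : Type*} [NormedAddCommGroup E] [NormedSpace ℝ E]

/-- The total variation of `f` along the half of the segment `[x, y]` next to `x`, computed from
the derivative in the parametrization `s ↦ y + s • (x - y)`. -/
noncomputable def halfSegmentVariation (f : E → ℝ) (x y : E) : ℝ≥0∞ :=
  ∫⁻ s in Ioo (1 / 2 : ℝ) 1, ‖fderiv ℝ f (y + s • (x - y)) (x - y)‖ₑ

lemma enorm_sub_midpoint_le_halfSegmentVariation {f : E → ℝ} (hf : Differentiable ℝ f) (x y : E) :
    ‖f x - f (midpoint ℝ x y)‖ₑ ≤ halfSegmentVariation f x y := by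
  have hderiv : ∀ s : ℝ, HasDerivAt (fun s : ℝ => f (y + s • (x - y)))
      (fderiv ℝ f (y + s • (x - y)) (x - y)) s := fun s => by
    have hline : HasDerivAt (fun s : ℝ => y + s • (x - y)) (x - y) s := by
      simpa using ((hasDerivAt_id s).smul_const (x - y)).const_add y
    exact (hf _).hasFDerivAt.comp_hasDerivAt s hline
  have hmid : y + (1 / 2 : ℝ) • (x - y) = midpoint ℝ x y := by
    rw [midpoint_eq_smul_add, invOf_eq_inv]
    module
  have h := enorm_sub_le_lintegral_enorm_deriv (fun s => (hderiv s).differentiableAt)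
    (show (1 / 2 : ℝ) ≤ 1 by norm_num)
  simpa only [halfSegmentVariation, one_smul, add_sub_cancel, hmid, (hderiv _).deriv] using h

lemma enorm_sub_le_halfSegmentVariation_add {f : E → ℝ} (hf : Differentiable ℝ f) (x y : E) :
    ‖f x - f y‖ₑ ≤ halfSegmentVariation f x y + halfSegmentVariation f y x := by
  have hy := enorm_sub_midpoint_le_halfSegmentVariation hf y x
  rw [midpoint_comm, ← edist_eq_enorm_sub, edist_comm] at hy
  rw [← edist_eq_enorm_sub]
  refine (edist_triangle _ (f (midpoint ℝ x y)) _).trans (add_le_add ?_ hy)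
  rw [edist_eq_enorm_sub]
  exact enorm_sub_midpoint_le_halfSegmentVariation hf x y

variable [FiniteDimensional ℝ E] [MeasurableSpace E] [BorelSpace E]

lemma measurable_fderiv_apply (f : E → ℝ) : Measurable fun w : E × E => fderiv ℝ f w.1 w.2 :=
  isBoundedBilinearMap_apply.continuous.measurable.comp
    (((measurable_fderiv ℝ f).comp measurable_fst).prodMk measurable_snd)

lemma measurable_enorm_fderiv_segment (f : E → ℝ) : Measurable fun w : (E × E) × ℝ =>
    ‖fderiv ℝ f (w.1.2 + w.2 • (w.1.1 - w.1.2)) (w.1.1 - w.1.2)‖ₑ :=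
  (measurable_enorm.comp (measurable_fderiv_apply f)).comp (f := fun w : (E × E) × ℝ =>
    (w.1.2 + w.2 • (w.1.1 - w.1.2), w.1.1 - w.1.2)) (by fun_prop)

lemma measurable_halfSegmentVariation (f : E → ℝ) :
    Measurable fun w : E × E => halfSegmentVariation f w.1 w.2 :=
  (measurable_enorm_fderiv_segment f).lintegral_prod_right'

end Segment

section MeasureSpace

variable {α : Type*} [MeasurableSpace α] {ν : Measure α} {f g : α → ℝ}

lemma measure_univ_mul_enorm_sub_average_le [IsFiniteMeasure ν] (hf : Integrable f ν) (a : ℝ) :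
    ν univ * ‖a - ⨍ y, f y ∂ν‖ₑ ≤ ∫⁻ y, ‖f y - a‖ₑ ∂ν := by
  have hint : ∫ y, (f y - a) ∂ν = -(ν.real univ * (a - ⨍ y, f y ∂ν)) := by
    rw [integral_sub hf (integrable_const _), integral_const, ← measure_smul_average, smul_eq_mul,
      smul_eq_mul]
    ring
  have h := enorm_integral_le_lintegral_enorm (μ := ν) fun y => f y - a
  rwa [hint, enorm_neg, enorm_mul, Real.enorm_of_nonneg measureReal_nonneg,
    ofReal_measureReal] at h

lemma integral_norm_le_of_lintegral_enorm_le {B : ℝ} (hB : 0 ≤ B)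
    (hf : ∫⁻ x, ‖f x‖ₑ ∂ν ≤ ENNReal.ofReal B) : ∫ x, ‖f x‖ ∂ν ≤ B := by
  refine (ENNReal.ofReal_le_ofReal_iff hB).1 (le_trans ?_ hf)
  rw [← Real.enorm_of_nonneg (integral_nonneg fun x => norm_nonneg (f x))]
  simpa only [enorm_norm] using enorm_integral_le_lintegral_enorm fun x => ‖f x‖

lemma memLp_two_sqrt (hf0 : ∀ x, 0 ≤ f x) (hf : Integrable f ν) :
    MemLp (fun x => √(f x)) 2 ν := by
  rw [memLp_two_iff_integrable_sq (Real.continuous_sqrt.comp_aestronglyMeasurable hf.1)]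
  simpa only [Real.sq_sqrt (hf0 _)] using hf

lemma integral_sqrt_mul_sqrt_le (hf0 : ∀ x, 0 ≤ f x) (hf : Integrable f ν) (hg0 : ∀ x, 0 ≤ g x)
    (hg : Integrable g ν) :
    ∫ x, √(f x) * √(g x) ∂ν ≤ √(∫ x, f x ∂ν) * √(∫ x, g x ∂ν) := by
  have htwo : ENNReal.ofReal 2 = 2 := ENNReal.ofReal_ofNat 2
  have h := integral_mul_le_Lp_mul_Lq_of_nonneg Real.HolderConjugate.two_two
    (ae_of_all _ fun x => Real.sqrt_nonneg (f x)) (ae_of_all _ fun x => Real.sqrt_nonneg (g x))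
    (htwo ▸ memLp_two_sqrt hf0 hf) (htwo ▸ memLp_two_sqrt hg0 hg)
  simpa only [Real.rpow_two, Real.sq_sqrt (hf0 _), Real.sq_sqrt (hg0 _), ← Real.sqrt_eq_rpow]
    using h

end MeasureSpace

section Poincare

variable {E : Type*} [NormedAddCommGroup E] [NormedSpace ℝ E] [FiniteDimensional ℝ E]
  [MeasurableSpace E] [BorelSpace E] {μ : Measure E} [μ.IsAddHaarMeasure]

lemma lintegral_eq_lintegral_homothety {F : E → ℝ≥0∞} (hF : Measurable F) {s : ℝ} (hs : 0 < s)
    (y : E) :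
    ∫⁻ x, F x ∂μ =
      ENNReal.ofReal (s ^ finrank ℝ E)⁻¹ * ∫⁻ z, F (y + s⁻¹ • (z - y)) ∂μ := by
  have hjac : ENNReal.ofReal (s ^ finrank ℝ E)⁻¹ *
      ENNReal.ofReal |((s⁻¹ ^ finrank ℝ E))⁻¹| = 1 := by
    rw [inv_pow, inv_inv, abs_of_pos (by positivity), ← ENNReal.ofReal_mul (by positivity),
      inv_mul_cancel₀ (by positivity), ENNReal.ofReal_one]
  calc ∫⁻ x, F x ∂μ = ∫⁻ x, F (y + x) ∂μ := (lintegral_add_left_eq_self F y).symm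
    _ = ENNReal.ofReal (s ^ finrank ℝ E)⁻¹ * ∫⁻ x, F (y + x) ∂(μ.map (s⁻¹ • ·)) := by
        rw [Measure.map_addHaar_smul μ (inv_ne_zero hs.ne'), lintegral_smul_measure, smul_eq_mul,
          ← mul_assoc, hjac, one_mul]
    _ = ENNReal.ofReal (s ^ finrank ℝ E)⁻¹ * ∫⁻ z, F (y + s⁻¹ • z) ∂μ := by
        rw [lintegral_map (f := fun x => F (y + x)) (hF.comp (measurable_const_add y))
          (measurable_const_smul s⁻¹)]
    _ = _ := by rw [lintegral_sub_right_eq_self (fun z => F (y + s⁻¹ • z)) y]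

lemma measurable_segmentDensity_fderiv {K : Set E} (hK : MeasurableSet K) (f : E → ℝ) :
    Measurable fun w : (E × E) × ℝ =>
      segmentDensity K (fderiv ℝ f w.1.2) w.1.2 w.1.1 w.2 := by
  have hset : MeasurableSet {w : (E × E) × ℝ | w.1.1 + w.2⁻¹ • (w.1.2 - w.1.1) ∈ K} :=
    hK.preimage (by fun_prop)
  have hfderiv : Measurable fun w : (E × E) × ℝ => fderiv ℝ f w.1.2 (w.1.1 - w.1.2) :=
    (measurable_fderiv_apply f).comp (f := fun w : (E × E) × ℝ => (w.1.2, w.1.1 - w.1.2))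
      (by fun_prop)
  exact Measurable.indicator (f := fun w : (E × E) × ℝ => ENNReal.ofReal
    ((w.2 ^ (finrank ℝ E + 1))⁻¹ * |fderiv ℝ f w.1.2 (w.1.1 - w.1.2)|)) (by fun_prop) hset

lemma setLIntegral_enorm_fderiv_segment_le {K : Set E} (hK : Convex ℝ K) (hKm : MeasurableSet K)
    (f : E → ℝ) {y : E} (hy : y ∈ K) {s : ℝ} (hs0 : 0 < s) (hs1 : s ≤ 1) :
    ∫⁻ x in K, ‖fderiv ℝ f (y + s • (x - y)) (x - y)‖ₑ ∂μ ≤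
      ∫⁻ z in K, segmentDensity K (fderiv ℝ f z) z y s ∂μ := by
  have hmeas : Measurable fun x => ‖fderiv ℝ f (y + s • (x - y)) (x - y)‖ₑ :=
    (measurable_enorm_fderiv_segment f).comp (f := fun x => ((x, y), s)) (by fun_prop)
  rw [← lintegral_indicator hKm, ← lintegral_indicator hKm,
    lintegral_eq_lintegral_homothety (hmeas.indicator hKm) hs0 y,
    ← lintegral_const_mul' _ _ ENNReal.ofReal_ne_top]
  refine lintegral_mono fun z => ?_
  by_cases hx : y + s⁻¹ • (z - y) ∈ K
  · have hz : z ∈ K := by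
      have hmem := hK.add_smul_sub_mem hy hx ⟨hs0.le, hs1⟩
      rwa [add_sub_cancel_left, smul_inv_smul₀ hs0.ne', add_sub_cancel] at hmem
    rw [indicator_of_mem hx, indicator_of_mem hz, segmentDensity,
      indicator_of_mem (show s ∈ {s : ℝ | y + s⁻¹ • (z - y) ∈ K} from hx), add_sub_cancel_left,
      smul_inv_smul₀ hs0.ne', add_sub_cancel, map_smul, Real.enorm_eq_ofReal_abs,
      ← ENNReal.ofReal_mul (by positivity), smul_eq_mul, abs_mul, abs_of_pos (inv_pos.2 hs0),
      ← mul_assoc, pow_succ, mul_inv, ← neg_sub y z, map_neg, abs_neg]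
  · rw [indicator_of_notMem hx, mul_zero]
    exact zero_le

lemma setLIntegral_halfSegmentVariation_le {K : Set E} (hK : Convex ℝ K) (hKm : MeasurableSet K)
    (f : E → ℝ) {y : E} (hy : y ∈ K) :
    ∫⁻ x in K, halfSegmentVariation f x y ∂μ ≤
      ∫⁻ z in K, segmentKernel K (fderiv ℝ f z) z y ∂μ := by
  have hvar : Measurable fun w : E × ℝ => ‖fderiv ℝ f (y + w.2 • (w.1 - y)) (w.1 - y)‖ₑ :=
    (measurable_enorm_fderiv_segment f).comp (f := fun w : E × ℝ => ((w.1, y), w.2)) (by fun_prop)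
  have hdens : Measurable fun w : ℝ × E => segmentDensity K (fderiv ℝ f w.2) w.2 y w.1 :=
    (measurable_segmentDensity_fderiv hKm f).comp (f := fun w : ℝ × E => ((y, w.2), w.1))
      (by fun_prop)
  calc _ = ∫⁻ s in Ioo (1 / 2 : ℝ) 1, ∫⁻ x in K, ‖fderiv ℝ f (y + s • (x - y)) (x - y)‖ₑ ∂μ :=
        lintegral_lintegral_swap hvar.aemeasurable
    _ ≤ ∫⁻ s in Ioo (1 / 2 : ℝ) 1, ∫⁻ z in K, segmentDensity K (fderiv ℝ f z) z y s ∂μ :=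
        setLIntegral_mono' measurableSet_Ioo fun s hs =>
          setLIntegral_enorm_fderiv_segment_le hK hKm f hy (one_half_pos.trans hs.1) hs.2.le
    _ = _ := lintegral_lintegral_swap hdens.aemeasurable

lemma lintegral_lintegral_halfSegmentVariation_le [Nontrivial E] {c : ℝ}
    (hc : RadialMeanBound (finrank ℝ E) c) {K : Set E} (hK : Convex ℝ K) (hKc : IsCompact K)
    (f : E → ℝ) :
    ∫⁻ y in K, ∫⁻ x in K, halfSegmentVariation f x y ∂μ ∂μ ≤
      ENNReal.ofReal ((2 ^ finrank ℝ E - 1) / finrank ℝ E * c * diam K) * μ K *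
        ∫⁻ z in K, ‖fderiv ℝ f z‖ₑ ∂μ := by
  have hKm := hKc.measurableSet
  have hconst : 0 ≤ (2 ^ finrank ℝ E - 1) / finrank ℝ E * c * diam K :=
    mul_nonneg (mul_nonneg (two_pow_sub_one_div_nonneg _) hc.nonneg) diam_nonneg
  calc _ ≤ ∫⁻ y in K, ∫⁻ z in K, segmentKernel K (fderiv ℝ f z) z y ∂μ ∂μ :=
        setLIntegral_mono' hKm fun y hy => setLIntegral_halfSegmentVariation_le hK hKm f hy
    _ = ∫⁻ z in K, ∫⁻ y in K, segmentKernel K (fderiv ℝ f z) z y ∂μ ∂μ :=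
        lintegral_lintegral_swap
          (measurable_segmentDensity_fderiv hKm f).lintegral_prod_right'.aemeasurable
    _ ≤ ∫⁻ z in K, ENNReal.ofReal ((2 ^ finrank ℝ E - 1) / finrank ℝ E * c * diam K) * μ K *
          ‖fderiv ℝ f z‖ₑ ∂μ := by
        refine setLIntegral_mono' hKm fun z hz => ?_
        refine (setLIntegral_segmentKernel_le hc hK hKc _ hz).trans_eq ?_
        rw [mul_left_comm (_ * c), mul_comm ‖_‖, ENNReal.ofReal_mul hconst, ofReal_norm,
          mul_right_comm]
    _ = _ := lintegral_const_mul _ (by fun_prop)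

lemma lintegral_lintegral_enorm_sub_le [Nontrivial E] {c : ℝ}
    (hc : RadialMeanBound (finrank ℝ E) c) {K : Set E} (hK : Convex ℝ K) (hKc : IsCompact K)
    {f : E → ℝ} (hf : Differentiable ℝ f) :
    ∫⁻ y in K, ∫⁻ x in K, ‖f x - f y‖ₑ ∂μ ∂μ ≤
      ENNReal.ofReal (2 * ((2 ^ finrank ℝ E - 1) / finrank ℝ E * c) * diam K) * μ K *
        ∫⁻ z in K, ‖fderiv ℝ f z‖ₑ ∂μ := by
  have hvar := measurable_halfSegmentVariation f
  calc _ ≤ ∫⁻ y in K, ∫⁻ x in K,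
          (halfSegmentVariation f x y + halfSegmentVariation f y x) ∂μ ∂μ :=
        lintegral_mono fun y => lintegral_mono fun x => enorm_sub_le_halfSegmentVariation_add hf x y
    _ = (∫⁻ y in K, ∫⁻ x in K, halfSegmentVariation f x y ∂μ ∂μ) +
          ∫⁻ y in K, ∫⁻ x in K, halfSegmentVariation f y x ∂μ ∂μ := by
        rw [← lintegral_add_left hvar.lintegral_prod_left']
        exact lintegral_congr fun y =>
          lintegral_add_left (hvar.comp (f := fun x => (x, y)) (by fun_prop)) _
    _ = 2 * ∫⁻ y in K, ∫⁻ x in K, halfSegmentVariation f x y ∂μ ∂μ := by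
        rw [two_mul]
        exact congrArg _ (lintegral_lintegral_swap hvar.aemeasurable)
    _ ≤ 2 * (ENNReal.ofReal ((2 ^ finrank ℝ E - 1) / finrank ℝ E * c * diam K) * μ K *
          ∫⁻ z in K, ‖fderiv ℝ f z‖ₑ ∂μ) := by
        gcongr
        exact lintegral_lintegral_halfSegmentVariation_le hc hK hKc f
    _ = _ := by
        rw [mul_assoc 2 (_ * c), ENNReal.ofReal_mul zero_le_two, ENNReal.ofReal_ofNat]
        simp only [mul_assoc]

lemma setLIntegral_enorm_sub_setAverage_le [Nontrivial E] {c : ℝ}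
    (hc : RadialMeanBound (finrank ℝ E) c) {C : Set E} (hC : Convex ℝ C)
    (hCb : Bornology.IsBounded C) {f : E → ℝ} (hf : Differentiable ℝ f) :
    ∫⁻ x in C, ‖f x - ⨍ y in C, f y ∂μ‖ₑ ∂μ ≤
      ENNReal.ofReal (2 * ((2 ^ finrank ℝ E - 1) / finrank ℝ E * c) * diam C) *
        ∫⁻ z in C, ‖fderiv ℝ f z‖ₑ ∂μ := by
  have hclosure : closure C =ᵐ[μ] C := closure_ae_eq_of_null_frontier (hC.addHaar_frontier μ)
  have hfinite : μ C ≠ ⊤ := hCb.measure_lt_top.ne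
  have : IsFiniteMeasure (μ.restrict C) := isFiniteMeasure_restrict.2 hfinite
  have hint : IntegrableOn f C μ :=
    (hf.continuous.continuousOn.integrableOn_compact hCb.isCompact_closure).mono_set subset_closure
  rcases eq_or_ne (μ C) 0 with hzero | hpos
  · simp only [setLIntegral_measure_zero _ _ hzero, mul_zero, le_refl]
  have hdouble := lintegral_lintegral_enorm_sub_le (μ := μ) hc hC.closure hCb.isCompact_closure hf
  simp only [Measure.restrict_congr_set hclosure, measure_congr hclosure, diam_closure] at hdouble
  rw [← ENNReal.mul_le_mul_iff_right hpos hfinite, ← lintegral_const_mul' _ _ hfinite]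
  calc _ ≤ ∫⁻ x in C, ∫⁻ y in C, ‖f y - f x‖ₑ ∂μ ∂μ := by
        refine lintegral_mono fun x => ?_
        simpa only [Measure.restrict_apply_univ] using
          measure_univ_mul_enorm_sub_average_le hint (f x)
    _ ≤ _ := hdouble
    _ = _ := by rw [mul_comm _ (μ C), mul_assoc]

lemma exists_radialMeanBound_le_pi_div_two {n : ℕ} (hn0 : n ≠ 0) (hn3 : n ≤ 3) :
    ∃ c, RadialMeanBound n c ∧ 2 * ((2 ^ n - 1) / n * c) ≤ Real.pi / 2 := by
  have hpi := Real.pi_gt_d2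
  obtain rfl | rfl | rfl : n = 1 ∨ n = 2 ∨ n = 3 := by omega
  · exact ⟨1 / 2, radialMeanBound_one_half 1, by push_cast; linarith⟩
  · exact ⟨1 / 2, radialMeanBound_one_half 2, by push_cast; linarith⟩
  · exact ⟨1 / 3, radialMeanBound_three, by push_cast; linarith⟩

lemma setLIntegral_enorm_sub_setAverage_le_pi_div_two [Nontrivial E] (hE : finrank ℝ E ≤ 3)
    {C : Set E} (hC : Convex ℝ C) (hCb : Bornology.IsBounded C) {f : E → ℝ}
    (hf : Differentiable ℝ f) :
    ∫⁻ x in C, ‖f x - ⨍ y in C, f y ∂μ‖ₑ ∂μ ≤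
      ENNReal.ofReal (Real.pi / 2 * diam C) * ∫⁻ z in C, ‖fderiv ℝ f z‖ₑ ∂μ := by
  obtain ⟨c, hc, hcpi⟩ := exists_radialMeanBound_le_pi_div_two finrank_pos.ne' hE
  refine (setLIntegral_enorm_sub_setAverage_le hc hC hCb hf).trans ?_
  gcongr

lemma lintegral_enorm_sub_cellAverage_le [Nontrivial E] (hE : finrank ℝ E ≤ 3) {ι : Type*}
    [Countable ι] {C : ι → Set E} (hCb : ∀ i, Bornology.IsBounded (C i))
    (hCc : ∀ i, Convex ℝ (C i)) (hCd : Pairwise (Function.onFun Disjoint C))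
    (hCu : (⋃ i, C i) = univ) {D : ℝ} (hD : ∀ i, diam (C i) ≤ D) {f πf : E → ℝ}
    (hf : Differentiable ℝ f) (hπ : ∀ i, ∀ x ∈ C i, πf x = ⨍ y in C i, f y ∂μ) :
    ∫⁻ x, ‖f x - πf x‖ₑ ∂μ ≤
      ENNReal.ofReal (Real.pi / 2 * D) * ∫⁻ x, ‖fderiv ℝ f x‖ₑ ∂μ := by
  have hCm : ∀ i, NullMeasurableSet (C i) μ := fun i => (hCc i).nullMeasurableSet μ
  have hcell : ∀ i, ∫⁻ x in C i, ‖f x - πf x‖ₑ ∂μ ≤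
      ENNReal.ofReal (Real.pi / 2 * D) * ∫⁻ x in C i, ‖fderiv ℝ f x‖ₑ ∂μ := fun i =>
    calc _ = ∫⁻ x in C i, ‖f x - ⨍ y in C i, f y ∂μ‖ₑ ∂μ :=
          lintegral_congr_ae <| (ae_restrict_mem₀ (hCm i)).mono fun x hx => by
            simp only [hπ i x hx]
      _ ≤ _ := setLIntegral_enorm_sub_setAverage_le_pi_div_two hE (hCc i) (hCb i) hf
      _ ≤ _ := by
          gcongr
          exact hD i
  have hCd' := hCd.mono fun i j hij => hij.aedisjoint (μ := μ)
  rw [← setLIntegral_univ, ← setLIntegral_univ fun x => ‖fderiv ℝ f x‖ₑ, ← hCu,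
    lintegral_iUnion₀ hCm hCd', lintegral_iUnion₀ hCm hCd', ← ENNReal.tsum_mul_left]
  exact ENNReal.tsum_le_tsum hcell

end Poincare

section WeizsaeckerBound

variable {E : Type*} [NormedAddCommGroup E] [NormedSpace ℝ E] {ρ : E → ℝ}
  {G : E → StrongDual ℝ E}

lemma norm_fderiv_eq_two_mul_sqrt_mul_sqrt
    (hρG : ∀ x, fderiv ℝ ρ x = (2 * √(ρ x)) • G x) (x : E) :
    ‖fderiv ℝ ρ x‖ = 2 * (√(ρ x) * √(‖G x‖ ^ 2)) := by
  rw [hρG, norm_smul, Real.norm_of_nonneg (by positivity), Real.sqrt_sq (norm_nonneg _), mul_assoc]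

variable [MeasurableSpace E] {μ : Measure E}

lemma integral_norm_fderiv_le_two_mul_sqrt_mul_sqrt (hρ0 : ∀ x, 0 ≤ ρ x) (hρ : Integrable ρ μ)
    (hG : Integrable (fun x => ‖G x‖ ^ 2) μ) (hρG : ∀ x, fderiv ℝ ρ x = (2 * √(ρ x)) • G x) :
    ∫ x, ‖fderiv ℝ ρ x‖ ∂μ ≤ 2 * √(∫ x, ρ x ∂μ) * √(∫ x, ‖G x‖ ^ 2 ∂μ) := by
  simp only [norm_fderiv_eq_two_mul_sqrt_mul_sqrt hρG]
  rw [integral_const_mul, mul_assoc]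
  gcongr
  exact integral_sqrt_mul_sqrt_le hρ0 hρ (fun x => sq_nonneg ‖G x‖) hG

lemma integrable_fderiv_of_eq_two_mul_sqrt_smul [FiniteDimensional ℝ E] [BorelSpace E]
    (hρ0 : ∀ x, 0 ≤ ρ x) (hρ : Integrable ρ μ) (hG : Integrable (fun x => ‖G x‖ ^ 2) μ)
    (hρG : ∀ x, fderiv ℝ ρ x = (2 * √(ρ x)) • G x) : Integrable (fderiv ℝ ρ) μ := by
  rw [← integrable_norm_iff (measurable_fderiv ℝ ρ).aestronglyMeasurable]
  simp only [norm_fderiv_eq_two_mul_sqrt_mul_sqrt hρG]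
  exact ((memLp_two_sqrt hρ0 hρ).integrable_mul
    (memLp_two_sqrt (fun x => sq_nonneg ‖G x‖) hG)).const_mul 2

end WeizsaeckerBound

theorem stmt11_general {E : Type*} [NormedAddCommGroup E] [NormedSpace ℝ E]
    [FiniteDimensional ℝ E] [Nontrivial E] [MeasurableSpace E] [BorelSpace E]
    (hE : finrank ℝ E ≤ 3) (μ : Measure E) [μ.IsAddHaarMeasure] {ι : Type*} [Countable ι]
    (ρ : E → ℝ) (N c F : ℝ) (hc : 0 < c) (hρ0 : ∀ x, 0 ≤ ρ x) (hρint : Integrable ρ μ)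
    (hN : ∫ x, ρ x ∂μ = N) (hρd : Differentiable ℝ ρ) (G : E → StrongDual ℝ E)
    (hG2 : Integrable (fun x => ‖G x‖ ^ 2) μ)
    (hgrad : ∀ x, fderiv ℝ ρ x = (2 * √(ρ x)) • G x) (hF : c * ∫ x, ‖G x‖ ^ 2 ∂μ ≤ F)
    (C : ι → Set E) (hCb : ∀ i, Bornology.IsBounded (C i)) (hCc : ∀ i, Convex ℝ (C i))
    (hCd : Pairwise (Function.onFun Disjoint C)) (hCu : (⋃ i, C i) = univ)
    (D : ℝ) (hD : ∀ i, diam (C i) ≤ D) (πρ : E → ℝ)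
    (hπ : ∀ i, ∀ x ∈ C i, πρ x = ⨍ y in C i, ρ y ∂μ) :
    ∫ x, |ρ x - πρ x| ∂μ ≤ Real.pi / 2 * D * (2 * √N) * √(F / c) := by
  have hD0 : 0 ≤ D := by
    obtain ⟨i, -⟩ := mem_iUnion.1 (hCu ▸ mem_univ (0 : E))
    exact diam_nonneg.trans (hD i)
  have hint := integrable_fderiv_of_eq_two_mul_sqrt_smul hρ0 hρint hG2 hgrad
  have hpoincare : ∫ x, |ρ x - πρ x| ∂μ ≤ Real.pi / 2 * D * ∫ x, ‖fderiv ℝ ρ x‖ ∂μ := by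
    refine integral_norm_le_of_lintegral_enorm_le (by positivity) ?_
    rw [ENNReal.ofReal_mul (by positivity), ofReal_integral_norm_eq_lintegral_enorm hint]
    exact lintegral_enorm_sub_cellAverage_le hE hCb hCc hCd hCu hD hρd hπ
  have henergy : ∫ x, ‖G x‖ ^ 2 ∂μ ≤ F / c := (le_div_iff₀' hc).2 hF
  have hgradient : ∫ x, ‖fderiv ℝ ρ x‖ ∂μ ≤ 2 * √N * √(F / c) := by
    subst hN
    refine (integral_norm_fderiv_le_two_mul_sqrt_mul_sqrt hρ0 hρint hG2 hgrad).trans ?_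
    gcongr
  calc _ ≤ Real.pi / 2 * D * ∫ x, ‖fderiv ℝ ρ x‖ ∂μ := hpoincare
    _ ≤ Real.pi / 2 * D * (2 * √N * √(F / c)) := by gcongr
    _ = _ := (mul_assoc _ _ _).symm

/-- Quantitative coarse-graining bound: if `ρ : ℝ³ → [0,∞)` has `∫ ρ = N`, `√ρ ∈ H¹` with
gradient `G` (so `∇ρ = 2 √ρ G`, integrable), the intrinsic energy satisfies
`F ≥ c ∫ ‖G‖²` with `c > 0`, and `π_n ρ` is the cell average of `ρ` over a countable
partition into bounded convex cells of diameter at most `D_n`, then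
`‖ρ − π_n ρ‖₁ ≤ (π/2) D_n · 2√N · √(F/c)`. -/
theorem stmt11 {ι : Type*} [Countable ι]
    (ρ : EuclideanSpace ℝ (Fin 3) → ℝ) (N c F : ℝ) (hc : 0 < c)
    (hρ0 : ∀ x, 0 ≤ ρ x) (hρint : Integrable ρ) (hN : ∫ x, ρ x = N)
    (hρd : Differentiable ℝ ρ)
    (G : EuclideanSpace ℝ (Fin 3) → EuclideanSpace ℝ (Fin 3))
    (hG2 : Integrable (fun x => ‖G x‖ ^ 2))
    (hgrad : ∀ x, gradient ρ x = (2 * Real.sqrt (ρ x)) • G x)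
    (hgradint : Integrable (fun x => ‖gradient ρ x‖))
    (hF : c * ∫ x, ‖G x‖ ^ 2 ≤ F)
    (C : ι → Set (EuclideanSpace ℝ (Fin 3)))
    (hCm : ∀ i, MeasurableSet (C i))
    (hCb : ∀ i, Bornology.IsBounded (C i))
    (hCc : ∀ i, Convex ℝ (C i))
    (hCd : Pairwise (Function.onFun Disjoint C))
    (hCu : (⋃ i, C i) = Set.univ)
    (hC0 : ∀ i, 0 < volume (C i)) (hCt : ∀ i, volume (C i) < ⊤)
    (Dn : ℝ) (hdiam : ∀ i, Metric.diam (C i) ≤ Dn)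
    (πρ : EuclideanSpace ℝ (Fin 3) → ℝ)
    (hπ : ∀ i, ∀ x ∈ C i, πρ x = (volume (C i)).toReal⁻¹ * ∫ y in C i, ρ y) :
    ∫ x, |ρ x - πρ x| ≤ (Real.pi / 2) * Dn * (2 * Real.sqrt N) * Real.sqrt (F / c) := by
  refine stmt11_general (by simp) volume ρ N c F hc hρ0 hρint hN hρd
    (fun x => InnerProductSpace.toDual ℝ _ (G x)) (by simpa using hG2) (fun x => ?_)
    (by simpa using hF) C hCb hCc hCd hCu Dn hdiam πρ fun i x hx => ?_
  · rw [← toDual_gradient, hgrad, map_smul]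
  · rw [hπ i x hx, setAverage_eq, smul_eq_mul, measureReal_def]
end
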